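/- arXiv:1408.5793 — 11 statements merged into one kernel-verified Lean document; each statement's English description precedes it below -/
import Mathlib

section
/- Let (X,d) be a metric space containing at least two points which admits dilations of every factor fixing a base point, i.e., there is a point x₀ ∈ X such that for every λ > 0 there exists a homeomorphism f_λ : X → X with f_λ(x₀) = x₀ and d(f_λ(x), f_λ(y)) = λ·d(x,y) for all x,y ∈ X. Then the 1-dimensional Hausdorff measure of X is infinite; in particular, the Hausdorff dimension of X is at least 1. -/
open MeasureTheory

/-!
The distance to the base point `x₀` is a `1`-Lipschitz map `X → ℝ`, so it does not increase
one-dimensional Hausdorff measure. If `z ≠ x₀`, the dilation of factor `t` moves `z` to a point at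
distance `t * dist z x₀` from `x₀`, so the image of this map contains a rescaled copy of the set of
factors, whose length is infinite.
-/

section Lipschitz

open scoped NNReal

variable {X : Type*} [EMetricSpace X] [MeasurableSpace X] [BorelSpace X]

theorem volume_image_le_of_lipschitzOnWith {K : ℝ≥0} {f : X → ℝ} {s : Set X}
    (hf : LipschitzOnWith K f s) : volume (f '' s) ≤ K * μH[1] s := by
  simpa [hausdorffMeasure_real] using hf.hausdorffMeasure_image_le zero_le_one

end Lipschitz

section Dilations

open scoped Pointwise

variable {X : Type*} [MetricSpace X] [MeasurableSpace X] [BorelSpace X]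

theorem volume_image_dist_le_hausdorffMeasure (x₀ : X) (s : Set X) :
    volume ((dist · x₀) '' s) ≤ μH[1] s := by
  simpa using volume_image_le_of_lipschitzOnWith (LipschitzWith.dist_left x₀).lipschitzOnWith

theorem ofReal_abs_mul_volume_le_hausdorffMeasure {x₀ : X} {s : Set X} {r : ℝ} {T : Set ℝ}
    (hT : ∀ t ∈ T, ∃ x ∈ s, dist x x₀ = t * r) :
    ENNReal.ofReal |r| * volume T ≤ μH[1] s := by
  have smul_subset : r • T ⊆ (dist · x₀) '' s := by
    rintro _ ⟨t, ht, rfl⟩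
    obtain ⟨x, hxs, hx⟩ := hT t ht
    exact ⟨x, hxs, hx.trans (mul_comm t r)⟩
  calc
    ENNReal.ofReal |r| * volume T = volume (r • T) := by simp [Measure.addHaar_smul]
    _ ≤ volume ((dist · x₀) '' s) := measure_mono smul_subset
    _ ≤ μH[1] s := volume_image_dist_le_hausdorffMeasure x₀ s

theorem hausdorff_dim_ge_one_of_dilations_general [Nontrivial X] {x₀ : X} {T : Set ℝ}
    (hT : volume T = ⊤) (hdil : ∀ t ∈ T, ∃ f : X → X, ∀ x, dist (f x) x₀ = t * dist x x₀) :
    μH[1] (Set.univ : Set X) = ⊤ ∧ 1 ≤ dimH (Set.univ : Set X) := by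
  obtain ⟨z, hz⟩ := exists_ne x₀
  have dilates_of_z : ∀ t ∈ T, ∃ x ∈ Set.univ, dist x x₀ = t * dist z x₀ := fun t ht ↦
    let ⟨f, hf⟩ := hdil t ht
    ⟨f z, Set.mem_univ (f z), hf z⟩
  have measure_eq_top : μH[1] (Set.univ : Set X) = ⊤ := by
    simpa [hT, ENNReal.mul_top, hz] using ofReal_abs_mul_volume_le_hausdorffMeasure dilates_of_z
  refine ⟨measure_eq_top, ?_⟩
  exact_mod_cast le_dimH_of_hausdorffMeasure_eq_top (d := 1) (mod_cast measure_eq_top)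

end Dilations

/-- A metric space with at least two points admitting dilations of every factor fixing a
base point has infinite Hausdorff 1-measure, and hence Hausdorff dimension at least 1. -/
theorem hausdorff_dim_ge_one_of_dilations
    {X : Type*} [MetricSpace X] [MeasurableSpace X] [BorelSpace X]
    (htwo : ∃ x y : X, x ≠ y)
    (hdil : ∃ x₀ : X, ∀ lam : ℝ, 0 < lam →
      ∃ f : X ≃ₜ X, f x₀ = x₀ ∧ ∀ x y, dist (f x) (f y) = lam * dist x y) :
    μH[1] (Set.univ : Set X) = ⊤ ∧ 1 ≤ dimH (Set.univ : Set X) := by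
  have : Nontrivial X := ⟨htwo⟩
  obtain ⟨x₀, hx₀⟩ := hdil
  exact hausdorff_dim_ge_one_of_dilations_general (x₀ := x₀) (Real.volume_Ioi (a := 0)) fun t ht ↦
    let ⟨f, hf₀, hf⟩ := hx₀ t ht
    ⟨f, fun x ↦ by simpa only [hf₀] using hf x x₀⟩
end

section
/- Let (X,d) be a locally compact metric space whose isometry group acts transitively, i.e., for all x,y ∈ X there is a surjective isometry f : X → X with f(x) = y. Then (X,d) is a complete metric space. -/
/-!
Around one point some ball of radius `r` lies in a complete set, and surjective isometries carry
that ball, with the same `r`, to every other point. A Cauchy filter contains a set of diameter less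
than `r`, so it lives in a single complete set and converges there.
-/

open Filter Function Metric Set
open scoped Topology Uniformity ENNReal

theorem completeSpace_of_forall_ball_subset_isComplete {X : Type*} [UniformSpace X]
    {V : SetRel X X} (hV : V ∈ 𝓤 X)
    (hball : ∀ x, ∃ K, IsComplete K ∧ UniformSpace.ball x V ⊆ K) : CompleteSpace X where
  complete {F} hF := by
    obtain ⟨hne, hsmall⟩ := cauchy_iff.1 hF
    obtain ⟨t, htF, htV⟩ := hsmall V hV
    obtain ⟨x, hxt⟩ := hne.nonempty_of_mem htF
    obtain ⟨K, hK, hxK⟩ := hball x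
    have htK : t ⊆ K := fun y hyt => hxK (htV (mk_mem_prod hxt hyt))
    obtain ⟨z, -, hz⟩ := hK F hF (le_principal_iff.2 (mem_of_superset htF htK))
    exact ⟨z, hz⟩

theorem image_eball_of_isometry_of_surjective {X Y : Type*} [PseudoEMetricSpace X]
    [PseudoEMetricSpace Y] {f : X → Y} (hf : Isometry f) (hsurj : Surjective f) (x : X)
    (r : ℝ≥0∞) : f '' eball x r = eball (f x) r := by
  rw [← hf.preimage_eball, image_preimage_eq _ hsurj]

theorem complete_of_locallyCompact_homogeneous_general
    {X : Type*} [PseudoEMetricSpace X] (hcomplete : ∀ x : X, ∃ K ∈ 𝓝 x, IsComplete K)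
    (htrans : ∀ x y : X, ∃ f : X → X, Surjective f ∧ Isometry f ∧ f x = y) :
    CompleteSpace X := by
  rcases isEmpty_or_nonempty X with _ | ⟨⟨x₀⟩⟩
  · infer_instance
  obtain ⟨K, hKx₀, hK⟩ := hcomplete x₀
  obtain ⟨r, hr, hrK⟩ := EMetric.mem_nhds_iff.1 hKx₀
  refine completeSpace_of_forall_ball_subset_isComplete (edist_mem_uniformity hr)
    fun y => ?_
  obtain ⟨f, hsurj, hf, rfl⟩ := htrans x₀ y
  have hfK : IsComplete (f '' K) := hf.isUniformInducing.isComplete_iff.2 hK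
  have hball : eball (f x₀) r ⊆ f '' K :=
    image_eball_of_isometry_of_surjective hf hsurj x₀ r ▸ image_mono hrK
  exact ⟨f '' K, hfK, fun z hz => hball (mem_eball'.2 hz)⟩

/-- A locally compact metric space whose isometry group acts transitively is complete. -/
theorem complete_of_locallyCompact_homogeneous
    {X : Type*} [MetricSpace X] [LocallyCompactSpace X]
    (htrans : ∀ x y : X, ∃ f : X → X, Function.Surjective f ∧
      (∀ u v, dist (f u) (f v) = dist u v) ∧ f x = y) :
    CompleteSpace X :=
  complete_of_locallyCompact_homogeneous_general
    (fun x => (exists_compact_mem_nhds x).imp fun _ ⟨hK, hKx⟩ => ⟨hKx, hK.isComplete⟩)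
    (by simpa only [isometry_iff_dist_eq] using htrans)
end

section
/- Let (X,d) be a locally compact metric space whose isometry group acts transitively (for all x,y ∈ X there is a surjective isometry f : X → X with f(x) = y), and which admits dilations of every factor fixing a base point: there is x₀ ∈ X such that for every λ > 0 there is a homeomorphism f_λ : X → X with f_λ(x₀) = x₀ and d(f_λ(x), f_λ(y)) = λ·d(x,y) for all x,y. Then (X,d) is proper: every closed ball in X is compact. -/
/-!
If a continuous surjection multiplies distances to `x₀` by at least `c > 1`, then it carries
`closedBall x₀ r` onto a set containing `closedBall x₀ (c * r)`, so compactness passes from the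
ball of radius `r` to the one of radius `c * r`. Starting from a small compact ball and iterating,
one obtains compact balls around `x₀` of arbitrarily large radius, and these absorb every ball.
-/

open Filter Function Metric Topology

section ExpandingMap

variable {X Y : Type*} [PseudoMetricSpace X] [PseudoMetricSpace Y]

theorem closedBall_mul_subset_image_closedBall {f : X → Y} {x₀ : X} {y₀ : Y} {c : ℝ}
    (hsurj : Surjective f) (hc : 0 < c) (hexp : ∀ x, c * dist x x₀ ≤ dist (f x) y₀) (r : ℝ) :
    closedBall y₀ (c * r) ⊆ f '' closedBall x₀ r := by
  intro y hy
  obtain ⟨x, rfl⟩ := hsurj y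
  exact Set.mem_image_of_mem f (le_of_mul_le_mul_left ((hexp x).trans hy) hc)

theorem isCompact_closedBall_mul_of_expanding {f : X → Y} {x₀ : X} {y₀ : Y} {c r : ℝ}
    (hcont : Continuous f) (hsurj : Surjective f) (hc : 0 < c)
    (hexp : ∀ x, c * dist x x₀ ≤ dist (f x) y₀) (hr : IsCompact (closedBall x₀ r)) :
    IsCompact (closedBall y₀ (c * r)) :=
  (hr.image hcont).of_isClosed_subset isClosed_closedBall
    (closedBall_mul_subset_image_closedBall hsurj hc hexp r)

theorem isCompact_closedBall_pow_mul_of_expanding {f : X → X} {x₀ : X} {c r : ℝ}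
    (hcont : Continuous f) (hsurj : Surjective f) (hc : 0 < c)
    (hexp : ∀ x, c * dist x x₀ ≤ dist (f x) x₀) (hr : IsCompact (closedBall x₀ r)) (n : ℕ) :
    IsCompact (closedBall x₀ (c ^ n * r)) := by
  induction n with
  | zero => simpa using hr
  | succ n ih =>
    rw [pow_succ', mul_assoc]
    exact isCompact_closedBall_mul_of_expanding hcont hsurj hc hexp ih

end ExpandingMap

theorem proper_of_locallyCompact_homogeneous_dilations_general
    {X : Type*} [PseudoMetricSpace X] {x₀ : X} {K : Set X} (hK : IsCompact K) (hKx₀ : K ∈ 𝓝 x₀)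
    {f : X → X} (hcont : Continuous f) (hsurj : Surjective f) {c : ℝ} (hc : 1 < c)
    (hexp : ∀ x, c * dist x x₀ ≤ dist (f x) x₀) :
    ProperSpace X := by
  obtain ⟨ε, hε, hεK⟩ := nhds_basis_closedBall.mem_iff.mp hKx₀
  have hball : IsCompact (closedBall x₀ ε) := hK.of_isClosed_subset isClosed_closedBall hεK
  have hradii : Tendsto (fun n : ℕ => c ^ n * ε) atTop atTop :=
    (tendsto_pow_atTop_atTop_of_one_lt hc).atTop_mul_const hε
  exact .of_seq_closedBall hradii <| .of_forall <|
    isCompact_closedBall_pow_mul_of_expanding hcont hsurj (zero_lt_one.trans hc) hexp hball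

/-- A locally compact metric space whose isometry group acts transitively and which admits
dilations of every factor fixing a base point is proper: every closed ball is compact. -/
theorem proper_of_locallyCompact_homogeneous_dilations
    {X : Type*} [MetricSpace X] [LocallyCompactSpace X]
    (htrans : ∀ x y : X, ∃ f : X → X, Function.Surjective f ∧
      (∀ u v, dist (f u) (f v) = dist u v) ∧ f x = y)
    (hdil : ∃ x₀ : X, ∀ lam : ℝ, 0 < lam →
      ∃ f : X ≃ₜ X, f x₀ = x₀ ∧ ∀ x y, dist (f x) (f y) = lam * dist x y) :
    ∀ (x : X) (r : ℝ), IsCompact (Metric.closedBall x r) := by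
  obtain ⟨x₀, hdil⟩ := hdil
  obtain ⟨f, hfix, hdist⟩ := hdil 2 two_pos
  obtain ⟨K, hK, hKx₀⟩ := exists_compact_mem_nhds x₀
  have hexp (x : X) : 2 * dist x x₀ ≤ dist (f x) x₀ := by rw [← hdist, hfix]
  exact (proper_of_locallyCompact_homogeneous_dilations_general hK hKx₀ f.continuous f.surjective
    one_lt_two hexp).isCompact_closedBall
end

section
/- Let (X,d) be a metric space that is locally compact, 2-point isometrically homogeneous, and admits dilations of every factor. If X has no between-point, then there exist p > 1 and L > 0 such that for every finite chain of points x₀, x₁, …, x_n in X one has d(x₀, x_n)^p ≤ L·Σ_{i=1}^{n} d(x_i, x_{i−1})^p. -/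
open Finset

/-!
Since any pair of points can be moved to any other by a dilation, the compactness of one ball turns
the absence of midpoints into a uniform statement: there is `m > 1/2` such that every `z` is at
distance at least `m * dist x y` from `x` or from `y`. Write `m = a + η` with `a > 1/2` and choose
`p > 1` so close to `1` that still `1/2 < a ^ p`. If a chain violated the inequality with constant
`(η ^ p)⁻¹`, cut it at the step where the partial sums of the `p`-th powers pass half their total.
By induction each of the two remaining pieces spans less than `a * D`, where `D` is the distance of
the end points, and the step in between spans less than `η * D`, so the point at the cut would be an
approximate midpoint of the end points.
-/

open Metric

lemma exists_one_lt_lt_rpow {a b : ℝ} (ha : a ≠ 0) (hab : b < a) : ∃ p : ℝ, 1 < p ∧ b < a ^ p := by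
  have hnear : ∀ᶠ p in nhds (1 : ℝ), b < a ^ p :=
    (Real.continuousAt_const_rpow ha).eventually <| lt_mem_nhds <| by
      simpa only [Real.rpow_one] using hab
  obtain ⟨p, hbp, hp⟩ :=
    ((hnear.filter_mono nhdsWithin_le_nhds).and (self_mem_nhdsWithin (s := Set.Ioi 1))).exists
  exact ⟨p, hp, hbp⟩

lemma exists_split_sum_range_le_half {𝕜 : Type*} [Field 𝕜] [LinearOrder 𝕜] [IsStrictOrderedRing 𝕜]
    {s : ℕ → 𝕜} {n : ℕ} (hn : n ≠ 0) (hs : 0 ≤ ∑ i ∈ range n, s i) :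
    ∃ k l, k + 1 + l = n ∧ ∑ i ∈ range k, s i ≤ (∑ i ∈ range n, s i) / 2 ∧
      ∑ i ∈ range l, s (k + 1 + i) ≤ (∑ i ∈ range n, s i) / 2 := by
  set S := ∑ i ∈ range n, s i
  obtain ⟨k, hk, hk_succ⟩ := Nat.exists_not_and_succ_of_not_zero_of_exists
    (p := fun j ↦ n ≤ j ∨ S / 2 < ∑ i ∈ range j, s i)
    (by simpa only [sum_range_zero, not_or, not_le, not_lt] using
      ⟨Nat.pos_of_ne_zero hn, div_nonneg hs zero_le_two⟩)
    ⟨n, Or.inl le_rfl⟩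
  obtain ⟨hkn, hhead⟩ : k < n ∧ ∑ i ∈ range k, s i ≤ S / 2 := by
    simpa only [not_or, not_le, not_lt] using hk
  obtain ⟨l, rfl⟩ := Nat.exists_eq_add_of_le hkn
  refine ⟨k, l, rfl, hhead, ?_⟩
  have hsplit : S = ∑ i ∈ range (k + 1), s i + ∑ i ∈ range l, s (k + 1 + i) := sum_range_add ..
  have hpassed : S / 2 ≤ ∑ i ∈ range (k + 1), s i := by
    rcases hk_succ with hlast | hpassed
    · obtain rfl : l = 0 := by omega
      exact half_le_self hs
    · exact hpassed.le
  linarith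

section Midpoint

variable {X : Type*} [PseudoMetricSpace X]

/-- `z` is a metric midpoint of `x` and `y`. Mathlib's `midpoint` requires an affine space. -/
def IsMetricMidpoint (x y z : X) : Prop :=
  dist x z = dist x y / 2 ∧ dist z y = dist x y / 2

/-- A quantitative form of the absence of midpoints: for `m > 1/2`, the pair `x`, `y` does not even
have approximate midpoints. -/
def HasMidpointGap (m : ℝ) (x y : X) : Prop :=
  ∀ z, m * dist x y ≤ max (dist x z) (dist z y)

/-- Any two pairs of points at positive distance are related by a dilation of the space. This
combines 2-point isometric homogeneity with the existence of dilations. -/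
def IsTwoPointDilationHomogeneous (X : Type*) [PseudoMetricSpace X] : Prop :=
  ∀ x₁ x₂ y₁ y₂ : X, dist x₁ x₂ ≠ 0 → dist y₁ y₂ ≠ 0 → ∃ f : X →ᵈ X, f x₁ = y₁ ∧ f x₂ = y₂

lemma isTwoPointDilationHomogeneous_of_isometries_of_dilations
    (hiso : ∀ x₁ x₂ y₁ y₂ : X, dist x₁ x₂ = dist y₁ y₂ →
      ∃ f : X → X, (∀ u v, dist (f u) (f v) = dist u v) ∧ f x₁ = y₁ ∧ f x₂ = y₂)
    (hdil : ∀ c : ℝ, 0 < c → ∃ f : X → X, ∀ x y, dist (f x) (f y) = c * dist x y) :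
    IsTwoPointDilationHomogeneous X := by
  intro x₁ x₂ y₁ y₂ hx hy
  have hc : 0 < dist y₁ y₂ / dist x₁ x₂ := by positivity
  obtain ⟨f, hf⟩ := hdil _ hc
  obtain ⟨g, hg, hg₁, hg₂⟩ :=
    hiso (f x₁) (f x₂) y₁ y₂ (by rw [hf, div_mul_cancel₀ _ hx])
  exact ⟨Dilation.mkOfDistEq (g ∘ f) ⟨⟨_, hc.le⟩, NNReal.coe_ne_zero.mp hc.ne',
    fun u v ↦ (hg _ _).trans (hf u v)⟩, hg₁, hg₂⟩

lemma IsMetricMidpoint.dist_eq_zero_of_no_between_point {x y z : X} (h : IsMetricMidpoint x y z)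
    (hnb : ¬ ∃ z x y : X, x ≠ z ∧ y ≠ z ∧ dist x y = dist x z + dist z y) : dist x y = 0 := by
  obtain ⟨hxz, hzy⟩ := h
  by_contra hxy
  refine hnb ⟨z, x, y, ?_, ?_, by rw [hxz, hzy, add_halves]⟩ <;> rintro rfl
  · exact hxy (by linarith [dist_self x])
  · exact hxy (by linarith [dist_self y])

lemma half_dist_lt_max_of_not_isMetricMidpoint {x y z : X} (h : ¬ IsMetricMidpoint x y z) :
    dist x y / 2 < max (dist x z) (dist z y) := by
  contrapose! h
  obtain ⟨hxz, hzy⟩ := max_le_iff.mp h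
  have htri := dist_triangle x z y
  exact ⟨by linarith, by linarith⟩

lemma HasMidpointGap.of_dilation {Y : Type*} [PseudoMetricSpace Y] {m : ℝ} {x y : X} (f : X →ᵈ Y)
    (h : HasMidpointGap m (f x) (f y)) : HasMidpointGap m x y := by
  intro z
  have hr : (0 : ℝ) < Dilation.ratio f := NNReal.coe_pos.mpr (Dilation.ratio_pos f)
  have hz := h (f z)
  rwa [Dilation.dist_eq, Dilation.dist_eq, Dilation.dist_eq, ← mul_max_of_nonneg _ _ hr.le,
    mul_left_comm, mul_le_mul_iff_right₀ hr] at hz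

lemma exists_hasMidpointGap_of_isCompact_closedBall {x y : X} {r : ℝ}
    (hr : IsCompact (closedBall x r)) (hxy : dist x y < 2 * r)
    (hmid : ∀ z, ¬ IsMetricMidpoint x y z) : ∃ m : ℝ, 1 / 2 < m ∧ HasMidpointGap m x y := by
  have hd : 0 < dist x y := dist_nonneg.lt_of_ne' fun h ↦ hmid x ⟨by simp [h], by simp [h]⟩
  obtain ⟨z₀, -, hmin⟩ := hr.exists_isMinOn (f := fun z ↦ max (dist x z) (dist z y))
    ⟨x, mem_closedBall_self (by linarith)⟩ (by fun_prop)
  set M := max (dist x z₀) (dist z₀ y)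
  have hM : dist x y / 2 < M := half_dist_lt_max_of_not_isMetricMidpoint (hmid z₀)
  refine ⟨min M r / dist x y, ?_, fun z ↦ ?_⟩
  · rw [lt_div_iff₀ hd]
    exact lt_min (by linarith) (by linarith)
  · rw [div_mul_cancel₀ _ hd.ne']
    by_cases hz : z ∈ closedBall x r
    · exact (min_le_left _ _).trans (hmin hz)
    · rw [mem_closedBall', not_le] at hz
      exact (min_le_right _ _).trans (hz.le.trans (le_max_left _ _))

/- If `x` is isolated, a small compact ball contains no second point, and one takes instead for `y`
a nearly nearest neighbour of `x`. -/
lemma exists_isCompact_closedBall_dist_lt_two_mul [WeaklyLocallyCompactSpace X] {x v : X}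
    (hv : dist x v ≠ 0) :
    ∃ y r, dist x y ≠ 0 ∧ dist x y < 2 * r ∧ IsCompact (closedBall x r) := by
  obtain ⟨r, hr, hcompact⟩ := exists_isCompact_closedBall x
  by_cases! hnear : ∃ y, dist x y ≠ 0 ∧ dist x y < 2 * r
  · obtain ⟨y, hy, hyr⟩ := hnear
    exact ⟨y, r, hy, hyr, hcompact⟩
  set A := {d | d ≠ 0 ∧ ∃ y, dist x y = d}
  set δ := sInf A
  have hA : A.Nonempty := ⟨_, hv, v, rfl⟩
  have hδ : 2 * r ≤ δ := le_csInf hA (by rintro _ ⟨hy, y, rfl⟩; exact hnear y hy)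
  obtain ⟨_, ⟨hy, y, rfl⟩, hyδ⟩ := exists_lt_of_csInf_lt hA (show δ < 2 * δ by linarith)
  obtain ⟨t, hyt, htδ⟩ := exists_between (show dist x y / 2 < δ by linarith)
  have hsub : closedBall x t ⊆ closedBall x r := by
    intro w hw
    rw [mem_closedBall'] at hw ⊢
    by_contra! hwr
    have hδw : δ ≤ dist x w :=
      csInf_le ⟨0, by rintro _ ⟨-, u, rfl⟩; exact dist_nonneg⟩ ⟨(hr.trans hwr).ne', w, rfl⟩
    linarith
  exact ⟨y, t, hy, by linarith, hcompact.of_isClosed_subset isClosed_closedBall hsub⟩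

lemma IsTwoPointDilationHomogeneous.exists_forall_hasMidpointGap [WeaklyLocallyCompactSpace X]
    (hX : IsTwoPointDilationHomogeneous X)
    (hmid : ∀ x y z : X, IsMetricMidpoint x y z → dist x y = 0) :
    ∃ m : ℝ, 1 / 2 < m ∧ ∀ x y : X, HasMidpointGap m x y := by
  by_cases! htriv : ∀ x y : X, dist x y = 0
  · exact ⟨1, by norm_num, fun x y z ↦ by simp [htriv]⟩
  obtain ⟨x₀, v, hv⟩ := htriv
  obtain ⟨y₀, r, hy₀, hy₀r, hr⟩ := exists_isCompact_closedBall_dist_lt_two_mul hv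
  obtain ⟨m, hm, hgap⟩ :=
    exists_hasMidpointGap_of_isCompact_closedBall hr hy₀r fun z hz ↦ hy₀ (hmid _ _ z hz)
  refine ⟨m, hm, fun x y ↦ ?_⟩
  by_cases hxy : dist x y = 0
  · intro z
    simp [hxy]
  · obtain ⟨f, rfl, rfl⟩ := hX x y x₀ y₀ hxy hy₀
    exact hgap.of_dilation f

end Midpoint

section Chain

variable {X : Type*} [PseudoMetricSpace X] {a η p : ℝ}

lemma HasMidpointGap.mul_dist_le_dist {x y u v : X} (h : HasMidpointGap (a + η) x y) (hη : 0 ≤ η)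
    (hxu : dist x u < a * dist x y) (hvy : dist v y < a * dist x y) :
    η * dist x y ≤ dist v u := by
  by_contra! hvu
  have hηD : 0 ≤ η * dist x y := by positivity
  have huy : dist u y ≤ dist v u + dist v y := dist_triangle_left u y v
  have hmax : max (dist x u) (dist u y) < (a + η) * dist x y :=
    max_lt (by linarith) (by linarith)
  exact (h u).not_gt hmax

lemma mul_dist_rpow_le_sum_of_hasMidpointGap (hgap : ∀ x y : X, HasMidpointGap (a + η) x y)
    (ha : 0 ≤ a) (hη : 0 < η) (hp : 0 < p) (hap : 1 / 2 ≤ a ^ p) (n : ℕ) (x : ℕ → X) :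
    (η * dist (x 0) (x n)) ^ p ≤ ∑ i ∈ range n, dist (x (i + 1)) (x i) ^ p := by
  induction n using Nat.strong_induction_on generalizing x with
  | _ n ih =>
  rcases eq_or_ne n 0 with rfl | hn
  · simp [Real.zero_rpow hp.ne']
  by_contra! hlt
  set s : ℕ → ℝ := fun i ↦ dist (x (i + 1)) (x i) ^ p
  set D := dist (x 0) (x n)
  have hs : ∀ i, 0 ≤ s i := fun i ↦ by positivity
  have hηD : 0 ≤ η * D := by positivity
  obtain ⟨k, l, hkl, hhead, htail⟩ := exists_split_sum_range_le_half hn (sum_nonneg fun i _ ↦ hs i)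
  have piece_lt {d : ℝ} (hd : 0 ≤ d) (h : (η * d) ^ p ≤ (∑ i ∈ range n, s i) / 2) : d < a * D := by
    have hpow : (η * d) ^ p < (η * (a * D)) ^ p := calc
      (η * d) ^ p ≤ 1 / 2 * ∑ i ∈ range n, s i := by linarith
      _ < 1 / 2 * (η * D) ^ p := by gcongr
      _ ≤ a ^ p * (η * D) ^ p := by gcongr
      _ = (η * (a * D)) ^ p := by rw [← Real.mul_rpow ha hηD, mul_left_comm]
    have hscaled : η * d < η * (a * D) :=
      (Real.rpow_lt_rpow_iff (by positivity) (by positivity) hp).mp hpow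
    exact lt_of_mul_lt_mul_left hscaled hη.le
  have hfirst : dist (x 0) (x k) < a * D :=
    piece_lt dist_nonneg ((ih k (by omega) x).trans hhead)
  have hlast : dist (x (k + 1)) (x n) < a * D := by
    have hchain := ih l (by omega) fun i ↦ x (k + 1 + i)
    rw [hkl] at hchain
    exact piece_lt dist_nonneg (hchain.trans htail)
  have hjump : η * D ≤ dist (x (k + 1)) (x k) :=
    (hgap _ _).mul_dist_le_dist hη.le hfirst hlast
  have hlarge : (η * D) ^ p ≤ ∑ i ∈ range n, s i := calc
    (η * D) ^ p ≤ s k := Real.rpow_le_rpow hηD hjump hp.le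
    _ ≤ ∑ i ∈ range n, s i :=
      single_le_sum (fun i _ ↦ hs i) (mem_range.mpr (by omega))
  exact hlt.not_ge hlarge

end Chain

theorem chain_inequality_of_no_between_point_general
    {X : Type*} [PseudoMetricSpace X] [WeaklyLocallyCompactSpace X]
    (hX : IsTwoPointDilationHomogeneous X)
    (hmid : ∀ x y z : X, IsMetricMidpoint x y z → dist x y = 0) :
    ∃ p : ℝ, 1 < p ∧ ∃ L : ℝ, 0 < L ∧
      ∀ (n : ℕ) (x : ℕ → X),
        dist (x 0) (x n) ^ p ≤ L * ∑ i ∈ range n, dist (x (i + 1)) (x i) ^ p := by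
  obtain ⟨m, hm, hgap⟩ := hX.exists_forall_hasMidpointGap hmid
  obtain ⟨a, ha, ham⟩ := exists_between hm
  obtain ⟨η, hη, rfl⟩ : ∃ η, 0 < η ∧ m = a + η := ⟨m - a, sub_pos.mpr ham, by ring⟩
  have ha_pos : 0 < a := by linarith
  obtain ⟨p, hp, hap⟩ := exists_one_lt_lt_rpow ha_pos.ne' ha
  refine ⟨p, hp, (η ^ p)⁻¹, by positivity, fun n x ↦ ?_⟩
  rw [le_inv_mul_iff₀ (by positivity), ← Real.mul_rpow hη.le dist_nonneg]
  exact mul_dist_rpow_le_sum_of_hasMidpointGap hgap ha_pos.le hη (by linarith) hap.le n x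

/-- If a locally compact, 2-point isometrically homogeneous metric space admitting dilations
of every factor has no between-point, then there are `p > 1` and `L > 0` such that
`d(x₀,x_n)^p ≤ L * Σ d(x_i,x_{i-1})^p` for all finite chains of points. -/
theorem chain_inequality_of_no_between_point
    {X : Type*} [MetricSpace X] [LocallyCompactSpace X]
    (h2 : ∀ x₁ x₂ y₁ y₂ : X, dist x₁ x₂ = dist y₁ y₂ →
      ∃ f : X → X, Function.Surjective f ∧ (∀ u v, dist (f u) (f v) = dist u v) ∧
        f x₁ = y₁ ∧ f x₂ = y₂)
    (hdil : ∀ lam : ℝ, 0 < lam →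
      ∃ f : X ≃ₜ X, ∀ x y, dist (f x) (f y) = lam * dist x y)
    (hnb : ¬ ∃ z x y : X, x ≠ z ∧ y ≠ z ∧ dist x y = dist x z + dist z y) :
    ∃ p : ℝ, 1 < p ∧ ∃ L : ℝ, 0 < L ∧
      ∀ (n : ℕ) (x : ℕ → X),
        dist (x 0) (x n) ^ p ≤ L * ∑ i ∈ Finset.range n, dist (x (i + 1)) (x i) ^ p := by
  exact chain_inequality_of_no_between_point_general
    (isTwoPointDilationHomogeneous_of_isometries_of_dilations
      (fun _ _ _ _ h ↦ (h2 _ _ _ _ h).imp fun _ hf ↦ hf.2)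
      (fun c hc ↦ (hdil c hc).elim fun f hf ↦ ⟨f, hf⟩))
    fun _ _ _ hz ↦ hz.dist_eq_zero_of_no_between_point hnb
end

section
/- Let (X,d) be a metric space that is locally compact, 2-point isometrically homogeneous, and admits dilations of every factor. Let a,b ∈ X with d(a,b) = 1, let p ≥ 1, and suppose φ(p) = inf_{x ∈ X} (d(a,x)^p + d(x,b)^p) < 1. Then for every δ > 0 there is a finite chain of points a = x₀, x₁, …, x_n = b in X with Σ_{i=1}^{n} d(x_i, x_{i−1})^p < δ. -/
/-!
Composing an isometry with a dilation, every pair `u, v` at positive distance is the image of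
`a, b` under a similarity of ratio `d(u,v)`. A point `m` with `c = d(a,m)^p + d(m,b)^p < 1`
is therefore carried to a point `w` with `d(u,w)^p + d(w,v)^p = c * d(u,v)^p`, so that subdividing
every step of a chain multiplies its `p`-energy by `c`. Since `c < 1` forces `m` to have positive
distance from `a` and `b`, no step degenerates, and subdividing the step from `a` to `b` `k` times
yields energy `c^k`.
-/

section ChainSums

open Finset

variable {X M R : Type*} {u v w : X}

/-- The total costs of the finite chains `u = x 0, x 1, …, x n = v`, where a step from `y` to `z`
costs `cost y z`. The paper's `p`-energy is the case `cost y z = dist y z ^ p`. A chain is encoded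
as a sequence `x : ℕ → X` whose values after `n` are irrelevant. -/
def chainSums [AddCommMonoid M] (cost : X → X → M) (u v : X) : Set M :=
  {s | ∃ (n : ℕ) (x : ℕ → X), x 0 = u ∧ x n = v ∧
    ∑ i ∈ range n, cost (x i) (x (i + 1)) = s}

theorem cost_mem_chainSums [AddCommMonoid M] (cost : X → X → M) (u v : X) :
    cost u v ∈ chainSums cost u v :=
  ⟨1, fun i => if i = 0 then u else v, by simp, by simp, by simp⟩

theorem add_mem_chainSums [AddCommMonoid M] {cost : X → X → M} {s t : M}
    (hs : s ∈ chainSums cost u v) (ht : t ∈ chainSums cost v w) :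
    s + t ∈ chainSums cost u w := by
  obtain ⟨n, x, hx₀, hxn, rfl⟩ := hs
  obtain ⟨m, y, hy₀, hym, rfl⟩ := ht
  let z : ℕ → X := fun i => if i < n then x i else y (i - n)
  have z_add (i : ℕ) : z (n + i) = y i := by simp [z]
  have z_of_le {i : ℕ} (hi : i ≤ n) : z i = x i := by
    obtain hlt | rfl := hi.lt_or_eq
    · exact if_pos hlt
    · simpa [hy₀, hxn] using z_add 0
  refine ⟨n + m, z, (z_of_le n.zero_le).trans hx₀, (z_add m).trans hym, ?_⟩
  rw [sum_range_add]
  congr 1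
  · refine sum_congr rfl fun i hi => ?_
    have hi : i < n := mem_range.1 hi
    rw [z_of_le hi.le, z_of_le hi]
  · simp only [add_assoc, z_add]

theorem pow_mul_mem_chainSums [Semiring R] {cost : X → X → R} {r : X → X → Prop} {c : R}
    (hsplit : ∀ u v, r u v → ∃ w, r u w ∧ r w v ∧ cost u w + cost w v = c * cost u v)
    (k : ℕ) (huv : r u v) : c ^ k * cost u v ∈ chainSums cost u v := by
  induction k generalizing u v with
  | zero => simpa using cost_mem_chainSums cost u v
  | succ k ih =>
    obtain ⟨w, huw, hwv, hw⟩ := hsplit u v huv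
    have hsum := add_mem_chainSums (ih huw) (ih hwv)
    rwa [← mul_add, hw, ← mul_assoc, ← pow_succ] at hsum

end ChainSums

section Similarity

variable {X : Type*} [PseudoMetricSpace X] {a b : X} {p : ℝ}

theorem exists_similarity_of_isometry_of_dilation
    (hisom : ∀ x₁ x₂ y₁ y₂ : X, dist x₁ x₂ = dist y₁ y₂ →
      ∃ f : X → X, (∀ x y, dist (f x) (f y) = dist x y) ∧ f x₁ = y₁ ∧ f x₂ = y₂)
    (hdil : ∀ r : ℝ, 0 < r → ∃ f : X → X, ∀ x y, dist (f x) (f y) = r * dist x y)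
    (hab : dist a b = 1) {u v : X} (huv : 0 < dist u v) :
    ∃ f : X → X, (∀ x y, dist (f x) (f y) = dist u v * dist x y) ∧ f a = u ∧ f b = v := by
  obtain ⟨f, hf⟩ := hdil (dist u v) huv
  obtain ⟨g, hg, hgu, hgv⟩ := hisom (f a) (f b) u v (by rw [hf, hab, mul_one])
  exact ⟨g ∘ f, fun x y => (hg _ _).trans (hf x y), hgu, hgv⟩

theorem dist_pos_of_rpow_add_rpow_lt {m : X}
    (h : dist a m ^ p + dist m b ^ p < dist a b ^ p) : 0 < dist a m ∧ 0 < dist m b := by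
  refine ⟨dist_nonneg.lt_of_ne' fun ham => ?_, dist_nonneg.lt_of_ne' fun hmb => ?_⟩
  · have hdist : dist m b = dist a b := by
      linarith [dist_triangle_left m b a, dist_triangle a m b]
    rw [hdist] at h
    exact h.not_ge (le_add_of_nonneg_left (by positivity))
  · have hdist : dist a m = dist a b := by
      linarith [dist_triangle_right a m b, dist_triangle a m b]
    rw [hdist] at h
    exact h.not_ge (le_add_of_nonneg_right (by positivity))

theorem exists_rpow_dist_add_rpow_dist_eq {u v m : X}
    (hsim : ∃ f : X → X, (∀ x y, dist (f x) (f y) = dist u v * dist x y) ∧ f a = u ∧ f b = v)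
    (ham : 0 < dist a m) (hmb : 0 < dist m b) (huv : 0 < dist u v) :
    ∃ w, 0 < dist u w ∧ 0 < dist w v ∧
      dist u w ^ p + dist w v ^ p = (dist a m ^ p + dist m b ^ p) * dist u v ^ p := by
  obtain ⟨f, hf, hfa, hfb⟩ := hsim
  have huw : dist u (f m) = dist u v * dist a m := by rw [← hf, hfa]
  have hwv : dist (f m) v = dist u v * dist m b := by rw [← hf, hfb]
  refine ⟨f m, huw ▸ mul_pos huv ham, hwv ▸ mul_pos huv hmb, ?_⟩
  rw [huw, hwv, Real.mul_rpow huv.le ham.le, Real.mul_rpow huv.le hmb.le]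
  ring

theorem small_chains_of_gauge_lt_one_general
    (hsim : ∀ u v : X, 0 < dist u v →
      ∃ f : X → X, (∀ x y, dist (f x) (f y) = dist u v * dist x y) ∧ f a = u ∧ f b = v)
    (hab : dist a b = 1) (hφ : (⨅ x : X, (dist a x ^ p + dist x b ^ p)) < 1)
    {δ : ℝ} (hδ : 0 < δ) :
    ∃ (n : ℕ) (x : ℕ → X), x 0 = a ∧ x n = b ∧
      ∑ i ∈ Finset.range n, dist (x (i + 1)) (x i) ^ p < δ := by
  have : Nonempty X := ⟨a⟩
  obtain ⟨m, hm⟩ := exists_lt_of_ciInf_lt hφ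
  obtain ⟨ham, hmb⟩ : 0 < dist a m ∧ 0 < dist m b :=
    dist_pos_of_rpow_add_rpow_lt (by rwa [hab, Real.one_rpow])
  obtain ⟨k, hk⟩ := exists_pow_lt_of_lt_one hδ hm
  obtain ⟨n, x, hx₀, hxn, hsum⟩ := pow_mul_mem_chainSums
    (cost := fun u v => dist u v ^ p) (r := fun u v => 0 < dist u v)
    (fun u v huv => exists_rpow_dist_add_rpow_dist_eq (hsim u v huv) ham hmb huv)
    k (hab ▸ one_pos)
  refine ⟨n, x, hx₀, hxn, ?_⟩
  simp only [hab, Real.one_rpow, mul_one] at hsum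
  simpa only [dist_comm, hsum] using hk

end Similarity

/-- If `X` is locally compact, 2-point isometrically homogeneous, admits dilations of every
factor, `d(a,b) = 1`, and `φ(p) < 1`, then there are chains from `a` to `b` with arbitrarily
small `p`-energy `Σ d(x_i,x_{i-1})^p`. -/
theorem small_chains_of_gauge_lt_one
    {X : Type*} [MetricSpace X] [LocallyCompactSpace X]
    (h2 : ∀ x₁ x₂ y₁ y₂ : X, dist x₁ x₂ = dist y₁ y₂ →
      ∃ f : X → X, Function.Surjective f ∧ (∀ u v, dist (f u) (f v) = dist u v) ∧
        f x₁ = y₁ ∧ f x₂ = y₂)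
    (hdil : ∀ lam : ℝ, 0 < lam →
      ∃ f : X ≃ₜ X, ∀ x y, dist (f x) (f y) = lam * dist x y)
    (a b : X) (hab : dist a b = 1) (p : ℝ) (hp : 1 ≤ p)
    (hφ : (⨅ x : X, (dist a x ^ p + dist x b ^ p)) < 1) :
    ∀ δ : ℝ, 0 < δ → ∃ (n : ℕ) (x : ℕ → X), x 0 = a ∧ x n = b ∧
      ∑ i ∈ Finset.range n, dist (x (i + 1)) (x i) ^ p < δ := fun _ =>
  small_chains_of_gauge_lt_one_general
    (fun _ _ => exists_similarity_of_isometry_of_dilation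
      (fun x₁ x₂ y₁ y₂ h => (h2 x₁ x₂ y₁ y₂ h).imp fun _ => And.right)
      (fun r hr => (hdil r hr).elim fun f hf => ⟨f, hf⟩) hab) hab hφ
end

section
/- Let (X,d) be a metric space that is 2-point isometrically homogeneous and admits dilations of every factor, let a,b ∈ X with d(a,b) = 1, and let p ≥ 1. If φ(p) = inf_{x ∈ X} (d(a,x)^p + d(x,b)^p) = 1, then d^p satisfies the triangle inequality; i.e., (X, d^p) is a metric space. -/
/-!
Shrink by `dist x z` and then move the image of `(x, z)` onto `(a, b)` by an isometry: the resulting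
map carries any third point `y` to a competitor in the infimum defining the gauge of `(a, b)`, and
scales `dist x y ^ p + dist y z ^ p` by `(dist x z ^ p)⁻¹`.
-/

section Gauge

variable {X Y : Type*} [PseudoMetricSpace X] [PseudoMetricSpace Y] {p : ℝ}

/-- The gauge `φ(p)` of the pair `(a, b)`: the infimum over all intermediate points `x` of the
cost of going from `a` to `b` via `x`, measured by the `p`-th power of the distance. The pair is an
argument, not required to be at distance `1`, so that its image under a dilation has a gauge too. -/
noncomputable def dpowGauge (a b : X) (p : ℝ) : ℝ :=
  ⨅ x : X, (dist a x ^ p + dist x b ^ p)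

theorem dpowGauge_le (a b x : X) : dpowGauge a b p ≤ dist a x ^ p + dist x b ^ p :=
  ciInf_le ⟨0, Set.forall_mem_range.2 fun _ => by positivity⟩ x

theorem dpowGauge_map_le {f : X → Y} {r : ℝ} (hr : 0 ≤ r)
    (hf : ∀ u v, dist (f u) (f v) = r * dist u v) (x y z : X) :
    dpowGauge (f x) (f z) p ≤ r ^ p * (dist x y ^ p + dist y z ^ p) :=
  calc
    dpowGauge (f x) (f z) p ≤ dist (f x) (f y) ^ p + dist (f y) (f z) ^ p := dpowGauge_le _ _ _
    _ = r ^ p * (dist x y ^ p + dist y z ^ p) := by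
      rw [hf, hf, Real.mul_rpow hr dist_nonneg, Real.mul_rpow hr dist_nonneg, mul_add]

end Gauge

section Homogeneous

variable {X : Type*} [PseudoMetricSpace X]

theorem exists_dilation_map_eq_map_eq
    (h2 : ∀ x₁ x₂ y₁ y₂ : X, dist x₁ x₂ = dist y₁ y₂ →
      ∃ f : X → X, Isometry f ∧ f x₁ = y₁ ∧ f x₂ = y₂)
    (hdil : ∀ r : ℝ, 0 < r → ∃ f : X → X, ∀ x y, dist (f x) (f y) = r * dist x y)
    {x z a b : X} (hxz : 0 < dist x z) (hab : 0 < dist a b) :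
    ∃ f : X → X, (∀ u v, dist (f u) (f v) = dist a b / dist x z * dist u v) ∧
      f x = a ∧ f z = b := by
  obtain ⟨g, hg⟩ := hdil (dist a b / dist x z) (div_pos hab hxz)
  have hgxz : dist (g x) (g z) = dist a b := by rw [hg, div_mul_cancel₀ _ hxz.ne']
  obtain ⟨h, hh, hx, hz⟩ := h2 (g x) (g z) a b hgxz
  exact ⟨h ∘ g, fun u v => (hh.dist_eq _ _).trans (hg u v), hx, hz⟩

theorem dpow_metric_of_gauge_eq_one_general
    (h2 : ∀ x₁ x₂ y₁ y₂ : X, dist x₁ x₂ = dist y₁ y₂ →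
      ∃ f : X → X, Isometry f ∧ f x₁ = y₁ ∧ f x₂ = y₂)
    (hdil : ∀ r : ℝ, 0 < r → ∃ f : X → X, ∀ x y, dist (f x) (f y) = r * dist x y)
    {a b : X} (hab : dist a b = 1) {p : ℝ} (hp : 0 < p) (x y z : X) :
    dpowGauge a b p * dist x z ^ p ≤ dist x y ^ p + dist y z ^ p := by
  rcases (dist_nonneg : 0 ≤ dist x z).eq_or_lt with hxz | hxz
  · rw [← hxz, Real.zero_rpow hp.ne', mul_zero]
    positivity
  obtain ⟨f, hf, rfl, rfl⟩ := exists_dilation_map_eq_map_eq h2 hdil hxz (hab ▸ one_pos)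
  have hgauge := dpowGauge_map_le (p := p) (by positivity) hf x y z
  rwa [hab, Real.div_rpow zero_le_one dist_nonneg, Real.one_rpow, one_div_mul_eq_div,
    le_div_iff₀ (by positivity)] at hgauge

end Homogeneous

/-- If `X` is 2-point isometrically homogeneous, admits dilations of every factor,
`d(a,b) = 1`, and the gauge `φ(p) = 1`, then `d^p` satisfies the triangle inequality,
i.e. `(X, d^p)` is a metric space. -/
theorem dpow_metric_of_gauge_eq_one
    {X : Type*} [MetricSpace X]
    (h2 : ∀ x₁ x₂ y₁ y₂ : X, dist x₁ x₂ = dist y₁ y₂ →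
      ∃ f : X → X, Function.Surjective f ∧ (∀ u v, dist (f u) (f v) = dist u v) ∧
        f x₁ = y₁ ∧ f x₂ = y₂)
    (hdil : ∀ lam : ℝ, 0 < lam →
      ∃ f : X ≃ₜ X, ∀ x y, dist (f x) (f y) = lam * dist x y)
    (a b : X) (hab : dist a b = 1) (p : ℝ) (hp : 1 ≤ p)
    (hφ : (⨅ x : X, (dist a x ^ p + dist x b ^ p)) = 1) :
    ∀ x y z : X, dist x z ^ p ≤ dist x y ^ p + dist y z ^ p := by
  intro x y z
  simpa only [dpowGauge, hφ, one_mul] using dpow_metric_of_gauge_eq_one_general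
    (fun _ _ _ _ h => (h2 _ _ _ _ h).imp fun _ hf => ⟨.of_dist_eq hf.2.1, hf.2.2⟩)
    (fun r hr => (hdil r hr).elim fun f hf => ⟨f, hf⟩) hab (one_pos.trans_le hp) x y z
end

section
/- Let (X,d) be a metric space with at least two points that is locally compact, 2-point isometrically homogeneous, and admits dilations of every factor. If X has no between-point, then there exists p > 1 such that d^p is a metric on X and the metric space (X, d^p) has at least one between-point. -/
/-! Choose distinct points `x₀`, `z₀` spanning a compact closed ball, and let `y₀` minimise
`max (d x₀ y) (d y z₀)`. Small spheres around `x₀` are nonempty, so by compactness `d` is not an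
ultrametric; by homogeneity the minimum is then smaller than `d x₀ z₀`, and some `p ≥ 1` satisfies
`d x₀ z₀ ^ p = 2 * max (d x₀ y₀) (d y₀ z₀) ^ p`. Homogeneity spreads minimality of `y₀` to
`d x z ^ p ≤ 2 * max (d x y ^ p) (d y z ^ p)` for all `x`, `y`, `z`, so by Frink's argument `d ^ p`
is comparable to a pseudometric. A single triple violating the triangle inequality for `d ^ p` could
be copied into every pair, and iterating would contradict comparability. Hence `d ^ p` is a metric,
and `y₀` is a midpoint of `x₀` and `z₀` for it. -/

open Metric Set
open scoped NNReal

section Frink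

variable {X : Type*} {ρ : X → X → ℝ≥0}

-- Take the last `k` satisfying the first bound.
theorem exists_le_two_mul_and_le_two_mul_succ (hself : ∀ x, ρ x x = 0)
    (hquasi : ∀ x y z, ρ x z ≤ 2 * max (ρ x y) (ρ y z)) (u : ℕ → X) {a b : ℕ} (hab : a ≤ b)
    (hpos : 0 < ρ (u a) (u b)) :
    ∃ k ∈ Ico a b, ρ (u a) (u b) ≤ 2 * ρ (u k) (u b) ∧ ρ (u a) (u b) ≤ 2 * ρ (u a) (u (k + 1)) := by
  by_contra! hnone
  have hfar : ∀ k, a ≤ k → k ≤ b → ρ (u a) (u b) ≤ 2 * ρ (u k) (u b) := by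
    refine Nat.le_induction (fun _ => by linarith) fun k hak ih hkb => ?_
    have hleft := hnone k ⟨hak, hkb⟩ (ih (Nat.le_of_succ_le hkb))
    have := hquasi (u a) (u (k + 1)) (u b)
    rw [mul_max, le_max_iff] at this
    exact this.resolve_left hleft.not_ge
  have := hfar b hab le_rfl
  rw [hself, mul_zero] at this
  exact hpos.not_ge this

-- Counting the inner edges twice as often makes the bound additive when the chain is cut into two
-- pieces sharing one edge.
theorem le_two_mul_sum_add_two_mul_sum_inner (hself : ∀ x, ρ x x = 0)
    (hquasi : ∀ x y z, ρ x z ≤ 2 * max (ρ x y) (ρ y z)) (u : ℕ → X) {a b : ℕ} (hab : a ≤ b) :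
    ρ (u a) (u b) ≤ 2 * ∑ i ∈ Finset.Ico a b, ρ (u i) (u (i + 1)) +
      2 * ∑ i ∈ Finset.Ico (a + 1) (b - 1), ρ (u i) (u (i + 1)) := by
  induction hn : b - a using Nat.strong_induction_on generalizing a b with
  | _ n ih =>
  subst hn
  rcases eq_zero_or_pos (ρ (u a) (u b)) with hzero | hpos
  · simp [hzero]
  obtain ⟨k, ⟨hak, hkb⟩, hright, hleft⟩ :=
    exists_le_two_mul_and_le_two_mul_succ hself hquasi u hab hpos
  have edge_le {i : ℕ} (hi : i ∈ Ico a b) :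
      ρ (u i) (u (i + 1)) ≤ ∑ j ∈ Finset.Ico a b, ρ (u j) (u (j + 1)) :=
    Finset.single_le_sum_of_canonicallyOrdered (f := fun j => ρ (u j) (u (j + 1)))
      (Finset.mem_Ico.2 hi)
  rcases hak.eq_or_lt with rfl | hak'
  · grw [hleft, edge_le ⟨le_rfl, hkb⟩]
    exact le_self_add
  rcases (Nat.succ_le_of_lt hkb).eq_or_lt with rfl | hkb'
  · grw [hright, edge_le ⟨hak, hkb⟩]
    exact le_self_add
  have hleft_sum := ih (k + 1 - a) (by lia) (by lia : a ≤ k + 1) rfl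
  have hright_sum := ih (b - k) (by lia) hkb.le rfl
  have hsplit := Finset.sum_Ico_consecutive (fun i => ρ (u i) (u (i + 1))) hak hkb.le
  have hsplit_inner := Finset.sum_Ico_consecutive (fun i => ρ (u i) (u (i + 1)))
    (show a + 1 ≤ k from hak') (show k ≤ b - 1 by lia)
  rw [Finset.sum_Ico_succ_top hak, Nat.add_sub_cancel] at hleft_sum
  rw [Finset.sum_eq_sum_Ico_succ_bot (show k < b - 1 by lia)] at hsplit_inner
  linarith

theorem exists_sum_zipWith_eq_sum_range (ρ : X → X → ℝ≥0) (x y : X) (l : List X) :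
    ∃ u : ℕ → X, u 0 = x ∧ u (l.length + 1) = y ∧
      (List.zipWith ρ (x :: l) (l ++ [y])).sum =
        ∑ i ∈ Finset.range (l.length + 1), ρ (u i) (u (i + 1)) := by
  induction l generalizing x with
  | nil => exact ⟨fun | 0 => x | _ + 1 => y, rfl, rfl, by simp⟩
  | cons a l ih =>
    obtain ⟨u, hu0, huy, hsum⟩ := ih a
    refine ⟨fun | 0 => x | i + 1 => u i, rfl, huy, ?_⟩
    rw [List.length_cons, Finset.sum_range_succ']
    simp [← hsum, hu0, add_comm]

/- Frink's inequality. The constant `2` is sharp, while the corresponding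
`PseudoMetricSpace.le_two_mul_dist_ofPreNNDist` needs it for chains of three edges. -/
theorem le_four_mul_dist_ofPreNNDist (hself : ∀ x, ρ x x = 0) (hcomm : ∀ x y, ρ x y = ρ y x)
    (hquasi : ∀ x y z, ρ x z ≤ 2 * max (ρ x y) (ρ y z)) (x y : X) :
    ρ x y ≤ 4 * (PseudoMetricSpace.ofPreNNDist ρ hself hcomm).dist x y := by
  rw [PseudoMetricSpace.dist_ofPreNNDist, ← NNReal.coe_ofNat, ← NNReal.coe_mul, NNReal.mul_iInf,
    NNReal.coe_le_coe]
  refine le_ciInf fun l => ?_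
  obtain ⟨u, rfl, rfl, hsum⟩ := exists_sum_zipWith_eq_sum_range ρ x y l
  rw [hsum, Finset.range_eq_Ico]
  have hchain := le_two_mul_sum_add_two_mul_sum_inner hself hquasi u (Nat.zero_le (l.length + 1))
  have hinner : ∑ i ∈ Finset.Ico (0 + 1) (l.length + 1 - 1), ρ (u i) (u (i + 1)) ≤
      ∑ i ∈ Finset.Ico 0 (l.length + 1), ρ (u i) (u (i + 1)) :=
    Finset.sum_le_sum_of_subset (Finset.Ico_subset_Ico (Nat.zero_le _) (Nat.sub_le _ _))
  linarith

end Frink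

/-- Any two pairs of distinct points are related by a map that multiplies `ρ` by a positive
constant. The maps need not be surjective, and `ρ` is an arbitrary function so that the notion
applies to powers of a distance. -/
def TwoPointDilationHomogeneous {X : Type*} (ρ : X → X → ℝ≥0) : Prop :=
  ∀ ⦃x z x' z' : X⦄, x ≠ z → x' ≠ z' → ∃ (f : X → X) (c : ℝ≥0), 0 < c ∧
    (∀ u v, ρ (f u) (f v) = c * ρ u v) ∧ f x = x' ∧ f z = z'

namespace TwoPointDilationHomogeneous

variable {X : Type*} {ρ : X → X → ℝ≥0}

theorem rpow (hρ : TwoPointDilationHomogeneous ρ) (p : ℝ) :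
    TwoPointDilationHomogeneous fun x y => ρ x y ^ p := by
  intro x z x' z' hxz hxz'
  obtain ⟨f, c, hc, hf, hx, hz⟩ := hρ hxz hxz'
  exact ⟨f, c ^ p, NNReal.rpow_pos hc, fun u v => by simp only [hf, NNReal.mul_rpow], hx, hz⟩

theorem le_mul_max (hρ : TwoPointDilationHomogeneous ρ) (hself : ∀ x, ρ x x = 0) {K : ℝ≥0}
    {x₀ z₀ : X} (hne : x₀ ≠ z₀) (h₀ : ∀ y, ρ x₀ z₀ ≤ K * max (ρ x₀ y) (ρ y z₀)) (x y z : X) :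
    ρ x z ≤ K * max (ρ x y) (ρ y z) := by
  rcases eq_or_ne x z with rfl | hxz
  · simp [hself]
  obtain ⟨f, c, hc, hf, rfl, rfl⟩ := hρ hxz hne
  have := h₀ (f y)
  rw [hf, hf, hf, ← mul_max, mul_left_comm] at this
  exact le_of_mul_le_mul_left this hc

theorem triangle_of_comparable (hρ : TwoPointDilationHomogeneous ρ) (hself : ∀ x, ρ x x = 0)
    {δ : X → X → ℝ≥0} (hδ : ∀ x y z, δ x z ≤ δ x y + δ y z) (hδρ : ∀ x y, δ x y ≤ ρ x y)
    {K : ℝ≥0} (hρδ : ∀ x y, ρ x y ≤ K * δ x y) (x y z : X) : ρ x z ≤ ρ x y + ρ y z := by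
  by_contra! hlt
  have hpos : 0 < ρ x z := pos_of_gt hlt
  have hxz : x ≠ z := by rintro rfl; exact hpos.ne' (hself x)
  set C := (ρ x y + ρ y z) / ρ x z with hC
  have hC1 : C < 1 := (div_lt_one hpos).2 hlt
  have hcontract (u v : X) (huv : u ≠ v) : ∃ w, ρ u w + ρ w v = C * ρ u v := by
    obtain ⟨f, c, -, hf, rfl, rfl⟩ := hρ hxz huv
    refine ⟨f y, ?_⟩
    rw [hf, hf, hf, hC]
    field_simp
  have hdecay (n : ℕ) : ∀ u v, δ u v ≤ C ^ n * ρ u v := by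
    induction n with
    | zero => simpa using hδρ
    | succ n ih =>
      intro u v
      rcases eq_or_ne u v with rfl | huv
      · simpa [hself] using hδρ u u
      obtain ⟨w, hw⟩ := hcontract u v huv
      calc δ u v ≤ δ u w + δ w v := hδ u w v
        _ ≤ C ^ n * ρ u w + C ^ n * ρ w v := add_le_add (ih u w) (ih w v)
        _ = C ^ (n + 1) * ρ u v := by rw [← mul_add, hw, pow_succ, mul_assoc]
  have hK : 0 < K := by
    refine pos_of_ne_zero fun h => hpos.not_ge ?_
    simpa [h] using hρδ x z
  obtain ⟨n, hn⟩ := exists_pow_lt_of_lt_one (inv_pos.2 hK) hC1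
  refine lt_irrefl (ρ x z) ?_
  calc ρ x z ≤ K * (C ^ n * ρ x z) := by grw [hρδ x z, hdecay n x z]
    _ < K * (K⁻¹ * ρ x z) := by gcongr
    _ = ρ x z := mul_inv_cancel_left₀ hK.ne' _

theorem triangle_of_le_two_mul_max (hρ : TwoPointDilationHomogeneous ρ) (hself : ∀ x, ρ x x = 0)
    (hcomm : ∀ x y, ρ x y = ρ y x) (hquasi : ∀ x y z, ρ x z ≤ 2 * max (ρ x y) (ρ y z))
    (x y z : X) : ρ x z ≤ ρ x y + ρ y z :=
  letI := PseudoMetricSpace.ofPreNNDist ρ hself hcomm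
  hρ.triangle_of_comparable hself nndist_triangle
    (PseudoMetricSpace.dist_ofPreNNDist_le ρ hself hcomm)
    (K := 4) (le_four_mul_dist_ofPreNNDist hself hcomm hquasi) x y z

end TwoPointDilationHomogeneous

theorem exists_rpow_eq_two_mul_rpow {a b : ℝ≥0} (hba : b < a) (hab : a ≤ 2 * b) :
    ∃ p : ℝ, 1 ≤ p ∧ a ^ p = 2 * b ^ p := by
  have hb : 0 < b := by
    refine pos_of_ne_zero fun h => hba.not_ge ?_
    simpa [h] using hab
  have hone : 1 < (a / b : ℝ) := (one_lt_div (NNReal.coe_pos.2 hb)).2 hba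
  refine ⟨Real.logb (a / b) 2, ?_, ?_⟩
  · rw [Real.le_logb_iff_rpow_le hone two_pos, Real.rpow_one, div_le_iff₀ (NNReal.coe_pos.2 hb)]
    exact hab
  · rw [← div_eq_iff (NNReal.rpow_pos hb).ne', ← NNReal.div_rpow]
    exact NNReal.eq (Real.rpow_logb (one_pos.trans hone) hone.ne' two_pos)

section Pseudometric

variable {X : Type*} [PseudoMetricSpace X]

theorem not_isUltrametricDist_of_isCompact_closedBall {x₀ : X} {r : ℝ} (hr : 0 < r)
    (hcompact : IsCompact (closedBall x₀ r)) (hdist : ∀ t ∈ Ioo 0 r, ∃ w, dist w x₀ = t) :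
    ¬ IsUltrametricDist X := by
  intro _
  have hball : IsCompact (ball x₀ r) :=
    hcompact.of_isClosed_subset (IsUltrametricDist.isClosed_ball x₀ r) ball_subset_closedBall
  obtain ⟨m, hm, hmax⟩ := hball.exists_isMaxOn ⟨x₀, mem_ball_self hr⟩
    (f := fun y => dist y x₀) (by fun_prop)
  obtain ⟨t, hmt, htr⟩ := exists_between (mem_ball.1 hm)
  obtain ⟨w, rfl⟩ := hdist t ⟨dist_nonneg.trans_lt hmt, htr⟩
  exact hmt.not_ge (hmax (mem_ball.2 htr))

theorem exists_forall_max_nndist_le {x z : X} (hcompact : IsCompact (closedBall x (dist x z))) :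
    ∃ y₀, ∀ y, max (nndist x y₀) (nndist y₀ z) ≤ max (nndist x y) (nndist y z) := by
  have hx : x ∈ closedBall x (dist x z) := mem_closedBall_self dist_nonneg
  obtain ⟨y₀, -, hmin⟩ := hcompact.exists_isMinOn ⟨x, hx⟩
    (f := fun y => max (nndist x y) (nndist y z)) (by fun_prop)
  refine ⟨y₀, fun y => ?_⟩
  by_cases hy : y ∈ closedBall x (dist x z)
  · exact hmin hy
  · rw [mem_closedBall', not_le] at hy
    calc max (nndist x y₀) (nndist y₀ z) ≤ max (nndist x x) (nndist x z) := hmin hx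
      _ = nndist x z := by simp
      _ ≤ max (nndist x y) (nndist y z) := le_max_of_le_left hy.le

theorem exists_max_nndist_lt (hhom : TwoPointDilationHomogeneous (nndist : X → X → ℝ≥0))
    (hultra : ¬ IsUltrametricDist X) {x z : X} (hxz : x ≠ z) :
    ∃ y, max (nndist x y) (nndist y z) < nndist x z := by
  by_contra! h
  have hmax := hhom.le_mul_max nndist_self (K := 1) hxz (by simpa only [one_mul] using h)
  exact hultra ⟨fun u v w => (hmax u v w).trans_eq (one_mul _)⟩

theorem exists_rpow_dist_triangle_and_between
    (hhom : TwoPointDilationHomogeneous (nndist : X → X → ℝ≥0)) (hultra : ¬ IsUltrametricDist X)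
    {x₀ z₀ : X} (hne : x₀ ≠ z₀) (hcompact : IsCompact (closedBall x₀ (dist x₀ z₀))) :
    ∃ p : ℝ, 1 ≤ p ∧ (∀ x y z : X, dist x z ^ p ≤ dist x y ^ p + dist y z ^ p) ∧
      ∃ y₀ : X, x₀ ≠ y₀ ∧ z₀ ≠ y₀ ∧ dist x₀ z₀ ^ p = dist x₀ y₀ ^ p + dist y₀ z₀ ^ p := by
  obtain ⟨y₀, hmin⟩ := exists_forall_max_nndist_le hcompact
  have hlt : max (nndist x₀ y₀) (nndist y₀ z₀) < nndist x₀ z₀ :=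
    let ⟨y, hy⟩ := exists_max_nndist_lt hhom hultra hne
    (hmin y).trans_lt hy
  have add_le (a b : ℝ≥0) : a + b ≤ 2 * max a b :=
    (add_le_add (le_max_left a b) (le_max_right a b)).trans_eq (two_mul _).symm
  have hle : nndist x₀ z₀ ≤ 2 * max (nndist x₀ y₀) (nndist y₀ z₀) :=
    (nndist_triangle x₀ y₀ z₀).trans (add_le _ _)
  obtain ⟨p, hp, heq⟩ := exists_rpow_eq_two_mul_rpow hlt hle
  have hp0 : 0 < p := one_pos.trans_le hp
  have max_rpow (a b : ℝ≥0) : max a b ^ p = max (a ^ p) (b ^ p) :=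
    (NNReal.monotone_rpow_of_nonneg hp0.le).map_max
  have hself (x : X) : nndist x x ^ p = 0 := by simp [hp0.ne']
  have hquasi₀ (y : X) : nndist x₀ z₀ ^ p ≤ 2 * max (nndist x₀ y ^ p) (nndist y z₀ ^ p) := by
    grw [heq, hmin y, max_rpow]
  have htriangle : ∀ x y z : X, nndist x z ^ p ≤ nndist x y ^ p + nndist y z ^ p :=
    (hhom.rpow p).triangle_of_le_two_mul_max hself (fun x y => by rw [nndist_comm])
      ((hhom.rpow p).le_mul_max hself hne hquasi₀)
  have hbetween : nndist x₀ z₀ ^ p = nndist x₀ y₀ ^ p + nndist y₀ z₀ ^ p := by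
    refine (htriangle x₀ y₀ z₀).antisymm ?_
    rw [heq, max_rpow]
    exact add_le _ _
  refine ⟨p, hp, fun x y z => mod_cast htriangle x y z, y₀, ?_, ?_, ?_⟩
  · rintro rfl
    simp at hlt
  · rintro rfl
    simp at hlt
  · simpa using congrArg NNReal.toReal hbetween

end Pseudometric

section Metric

variable {X : Type*} [MetricSpace X]

theorem twoPointDilationHomogeneous_nndist
    (h2 : ∀ x₁ x₂ y₁ y₂ : X, dist x₁ x₂ = dist y₁ y₂ →
      ∃ f : X → X, Isometry f ∧ f x₁ = y₁ ∧ f x₂ = y₂)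
    (hdil : ∀ lam : ℝ, 0 < lam → ∃ f : X → X, ∀ x y, dist (f x) (f y) = lam * dist x y) :
    TwoPointDilationHomogeneous (nndist : X → X → ℝ≥0) := by
  intro x z x' z' hxz hxz'
  have hpos : 0 < nndist x z := pos_of_ne_zero (mt nndist_eq_zero.1 hxz)
  have hpos' : 0 < nndist x' z' := pos_of_ne_zero (mt nndist_eq_zero.1 hxz')
  have hc : 0 < nndist x' z' / nndist x z := div_pos hpos' hpos
  obtain ⟨f, hf⟩ := hdil _ (NNReal.coe_pos.2 hc)
  obtain ⟨g, hg, hgx, hgz⟩ := h2 (f x) (f z) x' z' <| by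
    rw [hf, ← coe_nndist x z, ← NNReal.coe_mul, div_mul_cancel₀ _ hpos.ne', coe_nndist]
  exact ⟨g ∘ f, _, hc, fun u v => NNReal.eq ((hg.dist_eq _ _).trans (hf u v)), hgx, hgz⟩

theorem exists_dist_eq_of_homogeneous_of_dilations [Nontrivial X]
    (hhom : ∀ x y : X, ∃ f : X → X, Isometry f ∧ f x = y)
    (hdil : ∀ lam : ℝ, 0 < lam → ∃ f : X → X, ∀ x y, dist (f x) (f y) = lam * dist x y)
    (x₀ : X) {t : ℝ} (ht : 0 < t) : ∃ w, dist w x₀ = t := by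
  obtain ⟨w, hw⟩ := exists_ne x₀
  have hpos : 0 < dist w x₀ := dist_pos.2 hw
  obtain ⟨f, hf⟩ := hdil (t / dist w x₀) (div_pos ht hpos)
  obtain ⟨g, hg, hgx⟩ := hhom (f x₀) x₀
  exact ⟨g (f w), by rw [← hgx, hg.dist_eq, hf, div_mul_cancel₀ _ hpos.ne']⟩

theorem exists_p_desnowflake_with_between_point_general [Nontrivial X] {x₀ : X} {r : ℝ}
    (hr : 0 < r) (hcompact : IsCompact (closedBall x₀ r))
    (h2 : ∀ x₁ x₂ y₁ y₂ : X, dist x₁ x₂ = dist y₁ y₂ →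
      ∃ f : X → X, Isometry f ∧ f x₁ = y₁ ∧ f x₂ = y₂)
    (hdil : ∀ lam : ℝ, 0 < lam → ∃ f : X → X, ∀ x y, dist (f x) (f y) = lam * dist x y)
    (hnb : ¬ ∃ z x y : X, x ≠ z ∧ y ≠ z ∧ dist x y = dist x z + dist z y) :
    ∃ p : ℝ, 1 < p ∧
      (∀ x y z : X, dist x z ^ p ≤ dist x y ^ p + dist y z ^ p) ∧
      (∃ z x y : X, x ≠ z ∧ y ≠ z ∧ dist x y ^ p = dist x z ^ p + dist z y ^ p) := by
  have hhom (x y : X) : ∃ f : X → X, Isometry f ∧ f x = y :=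
    let ⟨f, hf, hfx, _⟩ := h2 x x y y (by simp only [dist_self])
    ⟨f, hf, hfx⟩
  have hdist (t : ℝ) (ht : 0 < t) : ∃ w, dist w x₀ = t :=
    exists_dist_eq_of_homogeneous_of_dilations hhom hdil x₀ ht
  have hultra : ¬ IsUltrametricDist X :=
    not_isUltrametricDist_of_isCompact_closedBall hr hcompact fun t ht => hdist t ht.1
  obtain ⟨z₀, rfl⟩ := hdist r hr
  rw [dist_comm] at hcompact
  obtain ⟨p, hp, htriangle, y₀, hx, hz, hbetween⟩ := exists_rpow_dist_triangle_and_between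
    (twoPointDilationHomogeneous_nndist h2 hdil) hultra (dist_pos.1 hr).symm hcompact
  refine ⟨p, hp.lt_of_ne ?_, htriangle, y₀, x₀, z₀, hx, hz, hbetween⟩
  rintro rfl
  exact hnb ⟨y₀, x₀, z₀, hx, hz, by simpa only [Real.rpow_one] using hbetween⟩

end Metric

/-- If a metric space with at least two points is locally compact, 2-point isometrically
homogeneous, admits dilations of every factor, and has no between-point, then there is
`p > 1` such that `d^p` is a metric on `X` and `(X, d^p)` has a between-point. -/
theorem exists_p_desnowflake_with_between_point
    {X : Type*} [MetricSpace X] [LocallyCompactSpace X]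
    (htwo : ∃ x y : X, x ≠ y)
    (h2 : ∀ x₁ x₂ y₁ y₂ : X, dist x₁ x₂ = dist y₁ y₂ →
      ∃ f : X → X, Function.Surjective f ∧ (∀ u v, dist (f u) (f v) = dist u v) ∧
        f x₁ = y₁ ∧ f x₂ = y₂)
    (hdil : ∀ lam : ℝ, 0 < lam →
      ∃ f : X ≃ₜ X, ∀ x y, dist (f x) (f y) = lam * dist x y)
    (hnb : ¬ ∃ z x y : X, x ≠ z ∧ y ≠ z ∧ dist x y = dist x z + dist z y) :
    ∃ p : ℝ, 1 < p ∧
      (∀ x y z : X, dist x z ^ p ≤ dist x y ^ p + dist y z ^ p) ∧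
      (∃ z x y : X, x ≠ z ∧ y ≠ z ∧ dist x y ^ p = dist x z ^ p + dist z y ^ p) := by
  have : Nontrivial X := ⟨htwo⟩
  obtain ⟨x₀, -⟩ := htwo
  obtain ⟨r, hr, hcompact⟩ := exists_isCompact_closedBall x₀
  exact exists_p_desnowflake_with_between_point_general hr hcompact
    (fun x₁ x₂ y₁ y₂ h => (h2 x₁ x₂ y₁ y₂ h).imp fun _ hf => ⟨Isometry.of_dist_eq hf.2.1, hf.2.2⟩)
    (fun lam hlam => let ⟨f, hf⟩ := hdil lam hlam; ⟨f, hf⟩) hnb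
end

section
/- Let (X,d) be a metric space that is locally compact, 2-point isometrically homogeneous, and admits dilations of every factor. If X has a between-point, then X is geodesic: for every x,y ∈ X there is an isometric embedding γ : [0, d(x,y)] → X with γ(0) = x and γ(d(x,y)) = y. -/
/-!
A metric space is Menger convex if any two distinct points have a third one strictly between them.
A dilation followed by an isometry carries the endpoints of the given betweenness triple to any
prescribed pair of distinct points, so one between-point makes `X` Menger convex. By homogeneity
all closed balls of some fixed radius are compact, so `X` is complete. It remains to prove Menger's
theorem, that a complete Menger convex space is geodesic: take a maximal set `S ∋ x, y` on which
the distance from `x` is an isometry into `ℝ`. The image of `S` is closed by completeness, and it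
contains `[0, dist x y]`, because a point between the two ends of a gap could be added to `S`.
-/

open Set Filter Metric

section Definitions

variable {X : Type*} [PseudoMetricSpace X]

/-- `z` is a between-point of the pair `x`, `y`: it differs from both and realizes equality in the
triangle inequality. -/
def MetricBetween (x z y : X) : Prop :=
  x ≠ z ∧ y ≠ z ∧ dist x y = dist x z + dist z y

variable (X) in
/-- Menger convexity: any two distinct points have a between-point. -/
def MengerConvex : Prop :=
  ∀ x y : X, x ≠ y → ∃ z, MetricBetween x z y

/-- The distance from `x` maps `S` isometrically into `ℝ`, as it does for a subset of a geodesic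
issuing from `x`. The point `x` need not belong to `S`. -/
def IsRadialFrom (x : X) (S : Set X) : Prop :=
  ∀ p ∈ S, ∀ q ∈ S, dist p q = |dist x p - dist x q|

end Definitions

theorem ordConnected_of_isClosed_of_forall_nonempty_inter_Ioo {α : Type*}
    [ConditionallyCompleteLinearOrder α] [TopologicalSpace α] [OrderTopology α] {s : Set α}
    (hs : IsClosed s) (h : ∀ a ∈ s, ∀ b ∈ s, a < b → (s ∩ Ioo a b).Nonempty) :
    s.OrdConnected := by
  refine ⟨fun a ha b hb t ht => ?_⟩
  by_contra hts
  obtain ⟨p, ⟨hp, hpt⟩, hp_max⟩ : ∃ p, IsGreatest (s ∩ Iic t) p :=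
    ⟨_, (hs.inter isClosed_Iic).isGreatest_csSup ⟨a, ha, ht.1⟩ ⟨t, fun _ hc => hc.2⟩⟩
  obtain ⟨q, ⟨hq, htq⟩, hq_min⟩ : ∃ q, IsLeast (s ∩ Ici t) q :=
    ⟨_, (hs.inter isClosed_Ici).isLeast_csInf ⟨b, hb, ht.2⟩ ⟨t, fun _ hc => hc.2⟩⟩
  have hpq : p < q := (hpt.lt_of_ne (ne_of_mem_of_not_mem hp hts)).trans_le htq
  obtain ⟨c, hc, hpc, hcq⟩ := h p hp q hq hpq
  rcases le_total c t with hct | htc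
  · exact (hp_max ⟨hc, hct⟩).not_gt hpc
  · exact (hq_min ⟨hc, htc⟩).not_gt hcq

section Radial

variable {X : Type*} [PseudoMetricSpace X] {x p q m : X} {S : Set X}

theorem isRadialFrom_pair (x y : X) : IsRadialFrom x {x, y} := by
  rintro p (rfl | rfl) q (rfl | rfl) <;> simp [dist_comm]

theorem isRadialFrom_sUnion {c : Set (Set X)} (hc : DirectedOn (· ⊆ ·) c)
    (h : ∀ S ∈ c, IsRadialFrom x S) : IsRadialFrom x (⋃₀ c) := by
  rintro p ⟨A, hA, hp⟩ q ⟨B, hB, hq⟩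
  obtain ⟨C, hC, hAC, hBC⟩ := hc A hA B hB
  exact h C hC p (hAC hp) q (hBC hq)

theorem IsRadialFrom.closure (hS : IsRadialFrom x S) : IsRadialFrom x (closure S) := by
  have hclosed : IsClosed {w : X × X | dist w.1 w.2 = |dist x w.1 - dist x w.2|} :=
    isClosed_eq (by fun_prop) (by fun_prop)
  have hsub := closure_minimal (fun w (hw : w ∈ S ×ˢ S) => hS w.1 hw.1 w.2 hw.2) hclosed
  rw [closure_prod_eq] at hsub
  exact fun p hp q hq => hsub (mk_mem_prod hp hq)

theorem IsRadialFrom.isometry_domRestrict (hS : IsRadialFrom x S) :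
    Isometry (S.domRestrict (dist x)) :=
  Isometry.of_dist_eq fun p q => (hS p p.2 q q.2).symm

theorem IsRadialFrom.isClosed_image_dist (hS : IsRadialFrom x S) (hcomplete : IsComplete S) :
    IsClosed (dist x '' S) := by
  have : CompleteSpace S := hcomplete.completeSpace_coe
  rw [← range_domRestrict]
  exact hS.isometry_domRestrict.isUniformInducing.isComplete_range.isClosed

theorem dist_eq_add_of_dist_eq_add (hxpq : dist x q = dist x p + dist p q)
    (hpmq : dist p q = dist p m + dist m q) : dist x m = dist x p + dist p m := by
  linarith [dist_triangle x p m, dist_triangle x m q]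

theorem IsRadialFrom.dist_eq_add (hS : IsRadialFrom x S) (hp : p ∈ S) (hq : q ∈ S)
    (hpq : dist x p ≤ dist x q) : dist x q = dist x p + dist p q := by
  rw [hS p hp q hq, abs_sub_comm, abs_of_nonneg (sub_nonneg.2 hpq)]
  ring

theorem IsRadialFrom.insert (hS : IsRadialFrom x S) (hp : p ∈ S) (hq : q ∈ S)
    (hpq : dist x p ≤ dist x q) (hgap : ∀ s ∈ S, dist x s ∉ Ioo (dist x p) (dist x q))
    (hm : dist p q = dist p m + dist m q) : IsRadialFrom x (insert m S) := by
  have hxpq : dist x q = dist x p + dist p q := hS.dist_eq_add hp hq hpq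
  have hxm : dist x m = dist x p + dist p m := dist_eq_add_of_dist_eq_add hxpq hm
  have hdist : ∀ s ∈ S, dist s m = |dist x s - dist x m| := by
    intro s hs
    refine le_antisymm ?_ (by simpa only [dist_comm x] using abs_dist_sub_le s m x)
    rcases le_or_gt (dist x s) (dist x p) with hsp | hps
    · have hsp' := hS.dist_eq_add hs hp hsp
      refine le_trans ?_ (neg_le_abs _)
      linarith [dist_triangle s p m]
    · have hqs : dist x q ≤ dist x s := not_lt.1 fun h => hgap s hs ⟨hps, h⟩
      have hqs' := hS.dist_eq_add hq hs hqs
      refine le_trans ?_ (le_abs_self _)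
      linarith [dist_triangle_right s m q, dist_comm q s]
  rintro a (rfl | ha) b (rfl | hb)
  · simp
  · rw [dist_comm, abs_sub_comm, hdist b hb]
  · exact hdist a ha
  · exact hS a ha b hb

theorem exists_maximal_isRadialFrom (x y : X) :
    ∃ S, {x, y} ⊆ S ∧ Maximal (IsRadialFrom x) S :=
  zorn_subset_nonempty {S | IsRadialFrom x S}
    (fun _ hc hchain _ => ⟨_, isRadialFrom_sUnion hchain.directedOn hc,
      fun _ => subset_sUnion_of_mem⟩) _ (isRadialFrom_pair x y)

theorem isClosed_of_maximal_isRadialFrom (hS : Maximal (IsRadialFrom x) S) : IsClosed S :=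
  closure_subset_iff_isClosed.1 (hS.le_of_ge hS.prop.closure subset_closure)

end Radial

section Menger

variable {X : Type*} [MetricSpace X] {x y : X} {S : Set X}

theorem MengerConvex.ordConnected_image_dist [CompleteSpace X] (hX : MengerConvex X)
    (hS : Maximal (IsRadialFrom x) S) : (dist x '' S).OrdConnected := by
  refine ordConnected_of_isClosed_of_forall_nonempty_inter_Ioo
    (hS.prop.isClosed_image_dist (isClosed_of_maximal_isRadialFrom hS).isComplete) ?_
  rintro _ ⟨p, hp, rfl⟩ _ ⟨q, hq, rfl⟩ hpq
  by_contra hempty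
  have hgap : ∀ s ∈ S, dist x s ∉ Ioo (dist x p) (dist x q) :=
    fun s hs hsI => hempty ⟨_, mem_image_of_mem _ hs, hsI⟩
  obtain ⟨m, hpm, hqm, hm⟩ := hX p q (ne_of_apply_ne _ hpq.ne)
  have hmS : m ∈ S :=
    hS.le_of_ge (hS.prop.insert hp hq hpq.le hgap hm) (subset_insert m S) (mem_insert m S)
  have hxq := hS.prop.dist_eq_add hp hq hpq.le
  have hxm := dist_eq_add_of_dist_eq_add hxq hm
  have hpm_pos : 0 < dist p m := dist_pos.2 hpm
  have hmq_pos : 0 < dist m q := dist_pos.2 hqm.symm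
  exact hgap m hmS ⟨by linarith, by linarith⟩

theorem IsRadialFrom.exists_geodesic (hS : IsRadialFrom x S) (hy : y ∈ S)
    (hIcc : Icc 0 (dist x y) ⊆ dist x '' S) :
    ∃ γ : ℝ → X, γ 0 = x ∧ γ (dist x y) = y ∧
      ∀ s ∈ Icc (0 : ℝ) (dist x y), ∀ t ∈ Icc (0 : ℝ) (dist x y),
        dist (γ s) (γ t) = |s - t| := by
  have : Nonempty X := ⟨x⟩
  choose! γ hγS hγ using hIcc
  have hend : dist x y ∈ Icc 0 (dist x y) := right_mem_Icc.2 dist_nonneg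
  refine ⟨γ, (dist_eq_zero.1 (hγ (left_mem_Icc.2 dist_nonneg))).symm, ?_, fun s hs t ht => ?_⟩
  · rw [← dist_eq_zero, hS _ (hγS hend) y hy, hγ hend, sub_self, abs_zero]
  · rw [hS _ (hγS hs) _ (hγS ht), hγ hs, hγ ht]

theorem MengerConvex.exists_geodesic [CompleteSpace X] (hX : MengerConvex X) (x y : X) :
    ∃ γ : ℝ → X, γ 0 = x ∧ γ (dist x y) = y ∧
      ∀ s ∈ Icc (0 : ℝ) (dist x y), ∀ t ∈ Icc (0 : ℝ) (dist x y),
        dist (γ s) (γ t) = |s - t| := by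
  obtain ⟨S, hxyS, hS⟩ := exists_maximal_isRadialFrom x y
  obtain ⟨hx, hy⟩ := pair_subset_iff.1 hxyS
  refine hS.prop.exists_geodesic hy ?_
  exact (hX.ordConnected_image_dist hS).out ⟨x, hx, dist_self x⟩ ⟨y, hy, rfl⟩

end Menger

section Completeness

theorem isometry_iterate {X : Type*} [PseudoEMetricSpace X] {f : X → X} (hf : Isometry f) :
    ∀ n : ℕ, Isometry f^[n]
  | 0 => isometry_id
  | n + 1 => (isometry_iterate hf n).comp hf

theorem surjOn_of_isometry_of_mapsTo {X : Type*} [MetricSpace X] {f : X → X} {K : Set X}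
    (hf : Isometry f) (hK : IsCompact K) (hfK : MapsTo f K K) : SurjOn f K K := by
  -- A point of `K` at distance at least `ε` from `f '' K` would have an `ε`-separated orbit in `K`.
  intro x hx
  by_contra hxf
  obtain ⟨ε, hε, hball⟩ := Metric.isOpen_iff.1
    (hK.image hf.continuous).isClosed.isOpen_compl x hxf
  have hsep : ∀ i n, ε ≤ dist (f^[i + (n + 1)] x) (f^[i] x) := by
    intro i n
    rw [Function.iterate_add_apply, (isometry_iterate hf i).dist_eq, Function.iterate_succ_apply']
    exact not_lt.1 fun h => hball h (mem_image_of_mem f (hfK.iterate n hx))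
  obtain ⟨a, -, φ, hφ, hlim⟩ := hK.tendsto_subseq fun n => hfK.iterate n hx
  obtain ⟨N, hN⟩ := Metric.cauchySeq_iff'.1 hlim.cauchySeq ε hε
  obtain ⟨k, hk⟩ := Nat.exists_eq_add_of_lt (hφ N.lt_succ_self)
  have hlt : dist (f^[φ (N + 1)] x) (f^[φ N] x) < ε := hN (N + 1) N.le_succ
  rw [hk] at hlt
  exact hlt.not_ge (hsep (φ N) k)

theorem isCompact_closedBall_of_isometry {X Y : Type*} [MetricSpace X] [MetricSpace Y]
    {f : X → Y} {g : Y → X} (hf : Isometry f) (hg : Isometry g) {x : X} {y : Y} (hfx : f x = y)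
    (hgy : g y = x) {r : ℝ} (h : IsCompact (closedBall x r)) : IsCompact (closedBall y r) := by
  -- Compactness makes the self-embedding `g ∘ f` of the ball about `x` onto, which forces `f` to
  -- map onto the ball about `y`.
  have hf_maps : MapsTo f (closedBall x r) (closedBall y r) := hfx ▸ hf.mapsTo_closedBall x r
  have hg_maps : MapsTo g (closedBall y r) (closedBall x r) := hgy ▸ hg.mapsTo_closedBall y r
  have hsurj : SurjOn (g ∘ f) (closedBall x r) (closedBall x r) :=
    surjOn_of_isometry_of_mapsTo (hg.comp hf) h (hg_maps.comp hf_maps)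
  have himage : f '' closedBall x r = closedBall y r := by
    refine hf_maps.image_subset.antisymm fun w hw => ?_
    obtain ⟨u, hu, huw⟩ := hsurj (hg_maps hw)
    exact ⟨u, hu, hg.injective huw⟩
  exact himage ▸ h.image hf.continuous

theorem completeSpace_of_isComplete_closedBall {X : Type*} [PseudoMetricSpace X] {r : ℝ}
    (hr : 0 < r) (h : ∀ x : X, IsComplete (closedBall x r)) : CompleteSpace X := by
  refine ⟨fun {F} hF => ?_⟩
  obtain ⟨hne, hsmall⟩ := Metric.cauchy_iff.1 hF
  obtain ⟨t, ht, hdist⟩ := hsmall r hr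
  obtain ⟨x, hx⟩ := hne.nonempty_of_mem ht
  have hF_le : F ≤ 𝓟 (closedBall x r) :=
    le_principal_iff.2 (mem_of_superset ht fun y hy => (hdist y hy x hx).le)
  obtain ⟨a, -, ha⟩ := h x F hF hF_le
  exact ⟨a, ha⟩

theorem completeSpace_of_forall_exists_isometry {X : Type*} [MetricSpace X]
    [WeaklyLocallyCompactSpace X] (h : ∀ x y : X, ∃ f : X → X, Isometry f ∧ f x = y) :
    CompleteSpace X := by
  rcases isEmpty_or_nonempty X with hX | ⟨⟨x⟩⟩
  · infer_instance
  obtain ⟨K, hK, hKx⟩ := exists_compact_mem_nhds x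
  obtain ⟨r, hr, hrK⟩ := nhds_basis_closedBall.mem_iff.1 hKx
  refine completeSpace_of_isComplete_closedBall hr fun y => IsCompact.isComplete ?_
  obtain ⟨f, hf, hfx⟩ := h x y
  obtain ⟨g, hg, hgy⟩ := h y x
  exact isCompact_closedBall_of_isometry hf hg hfx hgy
    (hK.of_isClosed_subset isClosed_closedBall hrK)

end Completeness

section Homogeneity

variable {X : Type*} [MetricSpace X]

theorem MetricBetween.dist_pos {x z y : X} (h : MetricBetween x z y) : 0 < dist x y := by
  rw [h.2.2]
  exact add_pos_of_pos_of_nonneg (_root_.dist_pos.2 h.1) dist_nonneg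

theorem MetricBetween.map {Y : Type*} [MetricSpace Y] {x z y : X} (h : MetricBetween x z y)
    {f : X → Y} {c : ℝ} (hc : c ≠ 0) (hf : ∀ u v, dist (f u) (f v) = c * dist u v) :
    MetricBetween (f x) (f z) (f y) := by
  obtain ⟨hxz, hyz, hdist⟩ := h
  have hne : ∀ {u v}, u ≠ v → f u ≠ f v := fun huv => by
    rw [← dist_ne_zero, hf]
    exact mul_ne_zero hc (dist_ne_zero.2 huv)
  exact ⟨hne hxz, hne hyz, by rw [hf, hf, hf, hdist, mul_add]⟩

theorem mengerConvex_of_metricBetween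
    (h2 : ∀ x₁ x₂ y₁ y₂ : X, dist x₁ x₂ = dist y₁ y₂ →
      ∃ f : X → X, Isometry f ∧ f x₁ = y₁ ∧ f x₂ = y₂)
    (hdil : ∀ c : ℝ, 0 < c → ∃ f : X → X, ∀ x y, dist (f x) (f y) = c * dist x y)
    {x z y : X} (hb : MetricBetween x z y) : MengerConvex X := by
  intro p q hpq
  have hc : 0 < dist p q / dist x y := div_pos (dist_pos.2 hpq) hb.dist_pos
  obtain ⟨f, hf⟩ := hdil _ hc
  have hfxy : dist (f x) (f y) = dist p q := by rw [hf, div_mul_cancel₀ _ hb.dist_pos.ne']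
  obtain ⟨g, hg, rfl, rfl⟩ := h2 (f x) (f y) p q hfxy
  exact ⟨g (f z), hb.map hc.ne' fun u v => by rw [hg.dist_eq, hf]⟩

end Homogeneity

theorem geodesic_of_between_point_general
    {X : Type*} [MetricSpace X] [WeaklyLocallyCompactSpace X]
    (h2 : ∀ x₁ x₂ y₁ y₂ : X, dist x₁ x₂ = dist y₁ y₂ →
      ∃ f : X → X, Isometry f ∧ f x₁ = y₁ ∧ f x₂ = y₂)
    (hdil : ∀ c : ℝ, 0 < c → ∃ f : X → X, ∀ x y, dist (f x) (f y) = c * dist x y)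
    (hb : ∃ z x y : X, MetricBetween x z y) (x y : X) :
    ∃ γ : ℝ → X, γ 0 = x ∧ γ (dist x y) = y ∧
      ∀ s ∈ Icc (0 : ℝ) (dist x y), ∀ t ∈ Icc (0 : ℝ) (dist x y),
        dist (γ s) (γ t) = |s - t| := by
  obtain ⟨_, _, _, hb⟩ := hb
  have : CompleteSpace X := completeSpace_of_forall_exists_isometry fun a b =>
    (h2 a a b b (by simp only [dist_self])).imp fun _ hf => ⟨hf.1, hf.2.1⟩
  exact (mengerConvex_of_metricBetween h2 hdil hb).exists_geodesic x y

/-- If a locally compact, 2-point isometrically homogeneous metric space admitting dilations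
of every factor has a between-point, then it is geodesic. -/
theorem geodesic_of_between_point
    {X : Type*} [MetricSpace X] [LocallyCompactSpace X]
    (h2 : ∀ x₁ x₂ y₁ y₂ : X, dist x₁ x₂ = dist y₁ y₂ →
      ∃ f : X → X, Function.Surjective f ∧ (∀ u v, dist (f u) (f v) = dist u v) ∧
        f x₁ = y₁ ∧ f x₂ = y₂)
    (hdil : ∀ lam : ℝ, 0 < lam →
      ∃ f : X ≃ₜ X, ∀ x y, dist (f x) (f y) = lam * dist x y)
    (hb : ∃ z x y : X, x ≠ z ∧ y ≠ z ∧ dist x y = dist x z + dist z y) :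
    ∀ x y : X, ∃ γ : ℝ → X, γ 0 = x ∧ γ (dist x y) = y ∧
      ∀ s ∈ Set.Icc (0 : ℝ) (dist x y), ∀ t ∈ Set.Icc (0 : ℝ) (dist x y),
        dist (γ s) (γ t) = |s - t| :=
  geodesic_of_between_point_general
    (fun _ _ _ _ h => (h2 _ _ _ _ h).imp fun _ hf => ⟨.of_dist_eq hf.2.1, hf.2.2⟩)
    (fun c hc => (hdil c hc).imp' DFunLike.coe fun _ hf => hf) hb
end

section
/- Let (X,d) be a metric space that is locally compact, 2-point isometrically homogeneous, and admits dilations of every factor. If X has no between-point, then there exists p > 1 such that d^p is a metric on X and the metric space (X, d^p) is geodesic: for every x,y ∈ X there is an isometric embedding γ : [0, d(x,y)^p] → (X, d^p) with γ(0) = x and γ(d(x,y)^p) = y. -/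
/-!
Let `M a b` be the largest distance covered by a step of length at most `a` followed by one of
length at most `b`. Since any pair of points can be moved to any other by a similarity, `M` is
homogeneous, its suprema are attained, and a pair of points at distance at most `M a b` is always
joined by two such steps; hence `M` is associative. The two laws make the `n`-fold sums
`s n = M (s (n - 1)) 1` multiplicative in `n`, so a monotone `s` is a power of `n`, and `M` becomes
ordinary addition after the substitution `a ↦ a ^ p`, where `M 1 1 ^ p = 2`. This reads
`d(x, z) ^ p ≤ d(x, y) ^ p + d(y, z) ^ p`, with `d ^ p`-midpoints.

Such a `p` exists and exceeds `1` because `1 < M 1 1 < 2`: if `M 1 1 ≤ 1`, then `d` is an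
ultrametric, whose balls are clopen and hence compact, whereas all distances occur; if
`M 1 1 = 2`, then a pair attaining it has a midpoint. Finally, geodesics for `d ^ p` come from
Menger's theorem: the domain of a maximal partial geodesic is closed, and a gap in it could be
filled by a point between the images of its end points.
-/

section Desnowflake

open scoped NNReal Uniformity
open Set Metric Dilation

/-! ### Homogeneous associative operations on `ℝ≥0` -/

theorem le_of_forall_pow_le_mul_pow {K : Type*} [Semifield K] [LinearOrder K]
    [IsStrictOrderedRing K] [ExistsAddOfLE K] [Archimedean K] {x y C : K} (hy : 0 ≤ y)
    (h : ∀ n : ℕ, x ^ n ≤ C * y ^ n) : x ≤ y := by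
  by_contra! hyx
  rcases hy.eq_or_lt with rfl | hy
  · exact hyx.not_ge (by simpa using h 1)
  · obtain ⟨n, hn⟩ := pow_unbounded_of_one_lt C ((one_lt_div hy).2 hyx)
    rw [div_pow, lt_div_iff₀ (pow_pos hy n)] at hn
    exact (h n).not_gt hn

theorem le_of_forall_natCast_mul_le_add {K : Type*} [Semiring K] [LinearOrder K]
    [IsStrictOrderedRing K] [ExistsAddOfLE K] [Archimedean K] {x y C : K}
    (h : ∀ n : ℕ, n * x ≤ n * y + C) : x ≤ y := by
  by_contra! hyx
  obtain ⟨δ, hδ, rfl⟩ := exists_pos_add_of_lt' hyx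
  obtain ⟨n, hn⟩ := exists_lt_nsmul hδ C
  have hCn : n * δ ≤ C := by simpa [mul_add] using h n
  exact hCn.not_gt (by simpa using hn)

theorem map_eq_natCast_of_monotone_of_map_two {K : Type*} [Semifield K] [LinearOrder K]
    [IsStrictOrderedRing K] [ExistsAddOfLE K] [Archimedean K] (s : ℕ →* K) (hs : Monotone s)
    (h2 : s 2 = 2) (n : ℕ) : s n = n := by
  have s_zero : s 0 = 0 := by
    have h : s 0 * 2 = s 0 := by rw [← h2, ← map_mul]
    simpa [mul_two] using h
  rcases eq_or_ne n 0 with rfl | hn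
  · simpa using s_zero
  have s_nonneg : 0 ≤ s n := s_zero ▸ hs n.zero_le
  have s_two_pow (j : ℕ) : s (2 ^ j) = 2 ^ j := by rw [map_pow, h2]
  -- Squeezing `n ^ k` between consecutive powers of two costs only a factor `2`, for every `k`.
  have dyadic_le (k : ℕ) : 2 ^ Nat.log 2 (n ^ k) ≤ n ^ k :=
    Nat.pow_log_le_self 2 (pow_ne_zero k hn)
  have le_dyadic (k : ℕ) : n ^ k ≤ 2 ^ (Nat.log 2 (n ^ k) + 1) :=
    (Nat.lt_pow_succ_log_self one_lt_two _).le
  apply le_antisymm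
  · refine le_of_forall_pow_le_mul_pow (C := 2) n.cast_nonneg fun k => ?_
    calc s n ^ k = s (n ^ k) := (map_pow s n k).symm
      _ ≤ 2 ^ (Nat.log 2 (n ^ k) + 1) := s_two_pow _ ▸ hs (le_dyadic k)
      _ = 2 * 2 ^ Nat.log 2 (n ^ k) := pow_succ' _ _
      _ ≤ 2 * (n : K) ^ k := by gcongr; exact_mod_cast dyadic_le k
  · refine le_of_forall_pow_le_mul_pow (C := 2) s_nonneg fun k => ?_
    calc (n : K) ^ k ≤ 2 ^ (Nat.log 2 (n ^ k) + 1) := by exact_mod_cast le_dyadic k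
      _ = 2 * 2 ^ Nat.log 2 (n ^ k) := pow_succ' _ _
      _ ≤ 2 * s n ^ k := by
        rw [← s_two_pow, ← map_pow]
        gcongr
        exact hs (dyadic_le k)

/-- The laws of addition on `ℝ≥0` that survive in the composition law `twoStep` of radii:
monotonicity, associativity, homogeneity of degree one, and neutrality of `0`. -/
structure IsHomogeneousAdd (M : ℝ≥0 → ℝ≥0 → ℝ≥0) : Prop where
  mono : ∀ ⦃a a' b b'⦄, a ≤ a' → b ≤ b' → M a b ≤ M a' b'
  assoc : ∀ a b c, M (M a b) c = M a (M b c)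
  mul_mul : ∀ r a b, M (r * a) (r * b) = r * M a b
  zero_left : ∀ a, M 0 a = a
  zero_right : ∀ a, M a 0 = a

/-- The `n`-fold sum `1 + ⋯ + 1` (bracketed to the left) with `M` in place of addition. -/
def sumOnes (M : ℝ≥0 → ℝ≥0 → ℝ≥0) : ℕ → ℝ≥0
  | 0 => 0
  | n + 1 => M (sumOnes M n) 1

namespace IsHomogeneousAdd

variable {M : ℝ≥0 → ℝ≥0 → ℝ≥0}

theorem sumOnes_one (hM : IsHomogeneousAdd M) : sumOnes M 1 = 1 := hM.zero_left 1

theorem sumOnes_add (hM : IsHomogeneousAdd M) (m n : ℕ) :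
    sumOnes M (m + n) = M (sumOnes M m) (sumOnes M n) := by
  induction n with
  | zero => exact (hM.zero_right _).symm
  | succ n ih => rw [← add_assoc, sumOnes, ih, hM.assoc, sumOnes]

theorem sumOnes_mul (hM : IsHomogeneousAdd M) (m n : ℕ) :
    sumOnes M (m * n) = sumOnes M m * sumOnes M n := by
  induction n with
  | zero => simp [sumOnes]
  | succ n ih => rw [mul_add_one, hM.sumOnes_add, ih, sumOnes, ← hM.mul_mul, mul_one]

theorem monotone_sumOnes (hM : IsHomogeneousAdd M) : Monotone (sumOnes M) :=
  monotone_nat_of_le_succ fun n => by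
    simpa only [hM.zero_right] using! hM.mono (le_refl (sumOnes M n)) zero_le_one

theorem sumOnes_eq_natCast (hM : IsHomogeneousAdd M) (h : M 1 1 = 2) (n : ℕ) :
    sumOnes M n = n :=
  map_eq_natCast_of_monotone_of_map_two
    { toFun := sumOnes M, map_one' := hM.sumOnes_one, map_mul' := hM.sumOnes_mul }
    hM.monotone_sumOnes (by simp [sumOnes, hM.zero_left, h]) n

theorem natCast_natCast (hM : IsHomogeneousAdd M) (h : M 1 1 = 2) (m n : ℕ) :
    M m n = m + n := by
  simpa only [hM.sumOnes_eq_natCast h, Nat.cast_add] using (hM.sumOnes_add m n).symm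

theorem eq_add (hM : IsHomogeneousAdd M) (h : M 1 1 = 2) (a b : ℝ≥0) : M a b = a + b := by
  apply le_antisymm
  · refine le_of_forall_natCast_mul_le_add (C := 2) fun n => ?_
    calc n * M a b = M (n * a) (n * b) := (hM.mul_mul _ _ _).symm
      _ ≤ M ⌈n * a⌉₊ ⌈n * b⌉₊ := hM.mono (Nat.le_ceil _) (Nat.le_ceil _)
      _ = ⌈n * a⌉₊ + ⌈n * b⌉₊ := hM.natCast_natCast h _ _
      _ ≤ (n * a + 1) + (n * b + 1) :=
        add_le_add (Nat.ceil_lt_add_one zero_le).le (Nat.ceil_lt_add_one zero_le).le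
      _ = n * (a + b) + 2 := by ring
  · refine le_of_forall_natCast_mul_le_add (C := 2) fun n => ?_
    calc n * (a + b) = n * a + n * b := mul_add _ _ _
      _ ≤ (⌊n * a⌋₊ + 1) + (⌊n * b⌋₊ + 1) :=
        add_le_add (Nat.lt_floor_add_one _).le (Nat.lt_floor_add_one _).le
      _ = M ⌊n * a⌋₊ ⌊n * b⌋₊ + 2 := by rw [hM.natCast_natCast h]; ring
      _ ≤ M (n * a) (n * b) + 2 := by
        gcongr
        exact hM.mono (Nat.floor_le zero_le) (Nat.floor_le zero_le)
      _ = n * M a b + 2 := by rw [hM.mul_mul]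

theorem rpow_conj (hM : IsHomogeneousAdd M) {p : ℝ} (hp : 0 < p) :
    IsHomogeneousAdd fun a b => M (a ^ p⁻¹) (b ^ p⁻¹) ^ p where
  mono a a' b b' ha hb := by
    have := hM.mono (NNReal.rpow_le_rpow ha (inv_nonneg.2 hp.le))
      (NNReal.rpow_le_rpow hb (inv_nonneg.2 hp.le))
    exact NNReal.rpow_le_rpow this hp.le
  assoc a b c := by simp only [NNReal.rpow_rpow_inv hp.ne', hM.assoc]
  mul_mul r a b := by
    simp only [NNReal.mul_rpow, hM.mul_mul, NNReal.rpow_inv_rpow hp.ne']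
  zero_left a := by
    simp only [NNReal.zero_rpow (inv_ne_zero hp.ne'), hM.zero_left, NNReal.rpow_inv_rpow hp.ne']
  zero_right a := by
    simp only [NNReal.zero_rpow (inv_ne_zero hp.ne'), hM.zero_right, NNReal.rpow_inv_rpow hp.ne']

theorem rpow_eq_add (hM : IsHomogeneousAdd M) {p : ℝ} (hp : 0 < p) (h : M 1 1 ^ p = 2)
    (a b : ℝ≥0) : M a b ^ p = a ^ p + b ^ p := by
  simpa only [NNReal.rpow_rpow_inv hp.ne'] using
    (hM.rpow_conj hp).eq_add (by simpa only [NNReal.one_rpow] using h) (a ^ p) (b ^ p)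

end IsHomogeneousAdd

theorem exists_one_lt_rpow_eq {x y : ℝ≥0} (hx : 1 < x) (hxy : x < y) :
    ∃ p : ℝ, 1 < p ∧ x ^ p = y := by
  refine ⟨Real.logb x y, ?_, ?_⟩
  · rw [Real.lt_logb_iff_rpow_lt (mod_cast hx) (mod_cast pos_of_gt hxy)]
    simpa using hxy
  · exact NNReal.eq <| Real.rpow_logb (mod_cast zero_lt_one.trans hx) (mod_cast hx.ne')
      (mod_cast pos_of_gt hxy)

/-! ### Menger's theorem -/

theorem exists_gap_of_isClosed {α : Type*} [ConditionallyCompleteLinearOrder α]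
    [TopologicalSpace α] [OrderTopology α] {A : Set α} (hA : IsClosed A) {a b t : α} (ha : a ∈ A)
    (hb : b ∈ A) (hat : a ≤ t) (htb : t ≤ b) (ht : t ∉ A) :
    ∃ u ∈ A, ∃ v ∈ A, u < v ∧ ∀ s ∈ A, s ≤ u ∨ v ≤ s := by
  obtain ⟨u, ⟨huA, hau, hut⟩, hu⟩ :=
    (isCompact_Icc.inter_left hA).exists_isGreatest ⟨a, ha, left_mem_Icc.2 hat⟩
  obtain ⟨v, ⟨hvA, htv, hvb⟩, hv⟩ :=
    (isCompact_Icc.inter_left hA).exists_isLeast ⟨b, hb, right_mem_Icc.2 htb⟩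
  refine ⟨u, huA, v, hvA, ?_, fun s hs => ?_⟩
  · exact (hut.lt_of_ne fun h => ht (h ▸ huA)).trans_le htv
  · rcases le_total s t with hst | hts
    · rcases le_total s a with hsa | has
      · exact Or.inl (hsa.trans hau)
      · exact Or.inl (hu ⟨hs, has, hst⟩)
    · rcases le_total s b with hsb | hbs
      · exact Or.inr (hv ⟨hs, hts, hsb⟩)
      · exact Or.inr (hvb.trans hbs)

/-- The set `G`, thought of as the graph of a partial function from `ℝ` to `Y`, preserves
distances. Over a metric space this makes it the graph of a geodesic with arbitrary domain. -/
def IsPartialGeodesic {Y : Type*} [Dist Y] (G : Set (ℝ × Y)) : Prop :=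
  ∀ q ∈ G, ∀ r ∈ G, dist q.2 r.2 = dist q.1 r.1

namespace IsPartialGeodesic

variable {Y : Type*}

section PseudoMetricSpace

variable [PseudoMetricSpace Y] {G : Set (ℝ × Y)}

protected theorem closure (hG : IsPartialGeodesic G) : IsPartialGeodesic (closure G) := by
  have hclosed : IsClosed {z : (ℝ × Y) × (ℝ × Y) | dist z.1.2 z.2.2 = dist z.1.1 z.2.1} :=
    isClosed_eq (by fun_prop) (by fun_prop)
  have hsub : G ×ˢ G ⊆ {z | dist z.1.2 z.2.2 = dist z.1.1 z.2.1} := fun z hz =>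
    hG z.1 hz.1 z.2 hz.2
  intro q hq r hr
  have hqr : (q, r) ∈ closure (G ×ˢ G) := closure_prod_eq.ge (mk_mem_prod hq hr)
  exact closure_minimal hsub hclosed hqr

protected theorem insert (hG : IsPartialGeodesic G) {t : ℝ} {w : Y}
    (h : ∀ q ∈ G, dist q.2 w = dist q.1 t) : IsPartialGeodesic (insert (t, w) G) := by
  rintro q (rfl | hq) r (rfl | hr)
  · simp
  · simpa only [dist_comm] using h r hr
  · exact h q hq
  · exact hG q hq r hr

protected theorem sUnion {c : Set (Set (ℝ × Y))} (hchain : IsChain (· ⊆ ·) c)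
    (hc : ∀ G ∈ c, IsPartialGeodesic G) : IsPartialGeodesic (⋃₀ c) := by
  rintro q ⟨G, hGc, hq⟩ r ⟨H, hHc, hr⟩
  rcases hchain.total hGc hHc with h | h
  · exact hc H hHc q (h hq) r hr
  · exact hc G hGc q hq r (h hr)

theorem exists_maximal (hG : IsPartialGeodesic G) :
    ∃ H, G ⊆ H ∧ Maximal IsPartialGeodesic H :=
  zorn_subset_nonempty {H | IsPartialGeodesic H}
    (fun c hc hchain _ =>
      ⟨⋃₀ c, IsPartialGeodesic.sUnion hchain hc, fun _ => subset_sUnion_of_mem⟩) G hG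

protected theorem pair (x y : Y) : IsPartialGeodesic {((0 : ℝ), x), (dist x y, y)} := by
  rintro q (rfl | rfl) r (rfl | rfl) <;> simp [dist_comm]

theorem insert_of_gap (hG : IsPartialGeodesic G) {u v : ℝ} {a b w : Y}
    (hu : (u, a) ∈ G) (hv : (v, b) ∈ G) (huv : u < v) (hgap : ∀ q ∈ G, q.1 ≤ u ∨ v ≤ q.1)
    (hw : dist a w + dist w b = dist a b) :
    IsPartialGeodesic (insert (u + dist a w, w) G) := by
  have hab : dist a b = v - u := by
    rw [hG _ hu _ hv, dist_comm, Real.dist_eq, abs_of_pos (sub_pos.2 huv)]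
  refine hG.insert fun q hq => ?_
  have hqa : dist q.2 a = |q.1 - u| := hG q hq _ hu
  have hqb : dist q.2 b = |q.1 - v| := hG q hq _ hv
  have haw : 0 ≤ dist a w := dist_nonneg
  have hwb : 0 ≤ dist w b := dist_nonneg
  rw [Real.dist_eq]
  rcases hgap q hq with hqu | hvq
  · rw [abs_of_nonpos (by linarith)] at hqa hqb ⊢
    apply le_antisymm
    · linarith [dist_triangle q.2 a w]
    · linarith [dist_triangle q.2 w b]
  · rw [abs_of_nonneg (by linarith)] at hqa hqb ⊢
    apply le_antisymm
    · linarith [dist_triangle_right q.2 w b]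
    · linarith [dist_triangle_right q.2 a w]

theorem isClosed_image_fst [CompleteSpace Y] (hG : IsPartialGeodesic G) (hcl : IsClosed G) :
    IsClosed (Prod.fst '' G) := by
  have hisom : Isometry fun q : G => q.1.1 := Isometry.of_dist_eq fun q r => by
    rw [Subtype.dist_eq, Prod.dist_eq, hG q q.2 r r.2, max_self]
  have : CompleteSpace G := hcl.completeSpace_coe
  simpa only [image_eq_range] using hisom.isUniformInducing.isComplete_range.isClosed

end PseudoMetricSpace

section MetricSpace

variable [MetricSpace Y] [CompleteSpace Y] {G : Set (ℝ × Y)}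

theorem Icc_subset_image_fst_of_maximal (hG : Maximal IsPartialGeodesic G)
    (hbetween : ∀ x y : Y, x ≠ y → ∃ w, w ≠ x ∧ w ≠ y ∧ dist x w + dist w y = dist x y)
    {s t : ℝ} (hs : s ∈ Prod.fst '' G) (ht : t ∈ Prod.fst '' G) : Icc s t ⊆ Prod.fst '' G := by
  rintro r ⟨hsr, hrt⟩
  by_contra hr
  have hcl : IsClosed G :=
    closure_subset_iff_isClosed.1 (hG.le_of_ge hG.prop.closure subset_closure)
  obtain ⟨_, ⟨⟨u, a⟩, hu, rfl⟩, _, ⟨⟨v, b⟩, hv, rfl⟩, huv, hgap⟩ :=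
    exists_gap_of_isClosed (hG.prop.isClosed_image_fst hcl) hs ht hsr hrt hr
  have hab : dist a b = v - u := by
    rw [hG.prop _ hu _ hv, dist_comm, Real.dist_eq, abs_of_pos (sub_pos.2 huv)]
  obtain ⟨w, hwa, hwb, hw⟩ := hbetween a b (dist_pos.1 (hab ▸ sub_pos.2 huv))
  have hmem : (u + dist a w, w) ∈ G := hG.mem_of_prop_insert <|
    hG.prop.insert_of_gap hu hv huv (fun q hq => hgap _ (mem_image_of_mem _ hq)) hw
  have haw : 0 < dist a w := dist_pos.2 hwa.symm
  have hwb : 0 < dist w b := dist_pos.2 hwb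
  have hgap_w : u + dist a w ≤ u ∨ v ≤ u + dist a w := hgap _ (mem_image_of_mem _ hmem)
  rcases hgap_w with h | h
  · linarith
  · linarith

end MetricSpace

end IsPartialGeodesic

theorem exists_geodesic_of_forall_exists_between {Y : Type*} [MetricSpace Y] [CompleteSpace Y]
    (hbetween : ∀ x y : Y, x ≠ y → ∃ w, w ≠ x ∧ w ≠ y ∧ dist x w + dist w y = dist x y)
    (x y : Y) :
    ∃ γ : ℝ → Y, γ 0 = x ∧ γ (dist x y) = y ∧
      ∀ s ∈ Icc 0 (dist x y), ∀ t ∈ Icc 0 (dist x y), dist (γ s) (γ t) = |s - t| := by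
  obtain ⟨G, hsub, hG⟩ := (IsPartialGeodesic.pair x y).exists_maximal
  have hx : (0, x) ∈ G := hsub (mem_insert _ _)
  have hy : (dist x y, y) ∈ G := hsub (mem_insert_of_mem _ rfl)
  have hdom : Icc 0 (dist x y) ⊆ Prod.fst '' G :=
    IsPartialGeodesic.Icc_subset_image_fst_of_maximal hG hbetween (mem_image_of_mem _ hx)
      (mem_image_of_mem _ hy)
  have hpoint (t : ℝ) : ∃ z, t ∈ Icc 0 (dist x y) → (t, z) ∈ G := by
    by_cases ht : t ∈ Icc 0 (dist x y)
    · obtain ⟨⟨_, z⟩, hz, rfl⟩ := hdom ht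
      exact ⟨z, fun _ => hz⟩
    · exact ⟨x, fun h => absurd h ht⟩
  choose γ hγ using hpoint
  have γ_eq {t : ℝ} {z : Y} (ht : t ∈ Icc 0 (dist x y)) (hz : (t, z) ∈ G) : γ t = z := by
    simpa using hG.prop _ (hγ t ht) _ hz
  exact ⟨γ, γ_eq (left_mem_Icc.2 dist_nonneg) hx, γ_eq (right_mem_Icc.2 dist_nonneg) hy,
    fun s hs t ht => hG.prop _ (hγ s hs) _ (hγ t ht)⟩

/-- The metric `dist ^ p`, given that it satisfies the triangle inequality. It keeps the original
uniformity definitionally, so that completeness of `X` carries over without proof. -/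
noncomputable abbrev rpowMetricSpace {X : Type*} [MetricSpace X] {p : ℝ} (hp : 0 < p)
    (htri : ∀ x y z : X, dist x z ^ p ≤ dist x y ^ p + dist y z ^ p) : MetricSpace X where
  dist x y := dist x y ^ p
  dist_self x := by rw [dist_self, Real.zero_rpow hp.ne']
  dist_comm x y := by rw [dist_comm]
  dist_triangle := htri
  eq_of_dist_eq_zero h := by
    rwa [Real.rpow_eq_zero dist_nonneg hp.ne', dist_eq_zero] at h
  toUniformSpace := inferInstance
  uniformity_dist := by
    have hbasis : (𝓤 X).HasBasis (0 < ·) fun ε : ℝ => {q | dist q.1 q.2 < ε ^ p⁻¹} :=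
      Metric.mk_uniformity_basis (fun ε hε => Real.rpow_pos_of_pos hε _) fun ε hε =>
        ⟨ε ^ p, Real.rpow_pos_of_pos hε _, (Real.rpow_rpow_inv hε.le hp.ne').le⟩
    rw [hbasis.eq_biInf]
    refine biInf_congr fun ε hε => ?_
    simp only [Real.lt_rpow_inv_iff_of_pos dist_nonneg hε.le hp]

theorem exists_rpow_geodesic {X : Type*} [MetricSpace X] [CompleteSpace X] {p : ℝ} (hp : 0 < p)
    (htri : ∀ x y z : X, dist x z ^ p ≤ dist x y ^ p + dist y z ^ p)
    (hbetween : ∀ x y : X, x ≠ y →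
      ∃ w, w ≠ x ∧ w ≠ y ∧ dist x w ^ p + dist w y ^ p = dist x y ^ p) (x y : X) :
    ∃ γ : ℝ → X, γ 0 = x ∧ γ (dist x y ^ p) = y ∧
      ∀ s ∈ Icc 0 (dist x y ^ p), ∀ t ∈ Icc 0 (dist x y ^ p),
        dist (γ s) (γ t) ^ p = |s - t| :=
  @exists_geodesic_of_forall_exists_between X (rpowMetricSpace hp htri) ‹_› hbetween x y

/-! ### Composing distances in similarity homogeneous spaces -/

theorem exists_lt_forall_dist_le_of_isUltrametricDist {X : Type*} [PseudoMetricSpace X]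
    [ProperSpace X] [IsUltrametricDist X] (o : X) {R : ℝ} (hR : 0 < R) :
    ∃ r < R, ∀ y, dist y o < R → dist y o ≤ r := by
  have hcomp : IsCompact (ball o R) :=
    (isCompact_closedBall o R).of_isClosed_subset (IsUltrametricDist.isClosed_ball o R)
      ball_subset_closedBall
  obtain ⟨z, hz, hmax⟩ := hcomp.exists_isMaxOn (f := (dist · o)) ⟨o, mem_ball_self hR⟩ (by fun_prop)
  exact ⟨dist z o, hz, fun y hy => hmax hy⟩

/-- The largest distance that two consecutive steps of lengths at most `a` and `b` can cover in `X`
(bounded by `a + b`, so the supremum is never a junk value; it is `0` if `X` is empty). It is the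
addition that `d ^ p` turns into ordinary addition. -/
noncomputable def twoStep (X : Type*) [PseudoMetricSpace X] (a b : ℝ≥0) : ℝ≥0 :=
  sSup {c | ∃ x y z : X, nndist x y ≤ a ∧ nndist y z ≤ b ∧ nndist x z = c}

section TwoStep

variable {X : Type*} [PseudoMetricSpace X] {a a' b b' : ℝ≥0}

theorem add_mem_upperBounds_twoStep (a b : ℝ≥0) :
    a + b ∈ upperBounds {c | ∃ x y z : X, nndist x y ≤ a ∧ nndist y z ≤ b ∧ nndist x z = c} := by
  rintro _ ⟨x, y, z, hxy, hyz, rfl⟩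
  exact (nndist_triangle x y z).trans (add_le_add hxy hyz)

theorem nndist_le_twoStep {x y z : X} (hxy : nndist x y ≤ a) (hyz : nndist y z ≤ b) :
    nndist x z ≤ twoStep X a b :=
  le_csSup ⟨a + b, add_mem_upperBounds_twoStep a b⟩ ⟨x, y, z, hxy, hyz, rfl⟩

theorem twoStep_le_add (a b : ℝ≥0) : twoStep X a b ≤ a + b :=
  csSup_le' (add_mem_upperBounds_twoStep a b)

theorem twoStep_mono (ha : a ≤ a') (hb : b ≤ b') : twoStep X a b ≤ twoStep X a' b' :=
  csSup_le' <| by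
    rintro _ ⟨x, y, z, hxy, hyz, rfl⟩
    exact nndist_le_twoStep (hxy.trans ha) (hyz.trans hb)

theorem twoStep_comm (a b : ℝ≥0) : twoStep X a b = twoStep X b a := by
  have h (a b : ℝ≥0) : twoStep X a b ≤ twoStep X b a := csSup_le' <| by
    rintro _ ⟨x, y, z, hxy, hyz, rfl⟩
    rw [nndist_comm]
    exact nndist_le_twoStep (nndist_comm y z ▸ hyz) (nndist_comm x y ▸ hxy)
  exact (h a b).antisymm (h b a)

theorem isCompact_setOf_nndist_le [ProperSpace X] (o : X) (a b : ℝ≥0) :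
    IsCompact {q : X × X | nndist o q.1 ≤ a ∧ nndist q.1 q.2 ≤ b} := by
  apply isCompact_of_isClosed_isBounded
  · exact (isClosed_le (by fun_prop) (by fun_prop)).inter (isClosed_le (by fun_prop) (by fun_prop))
  · refine (isBounded_closedBall (x := (o, o)) (r := (a + b : ℝ≥0))).subset ?_
    rintro ⟨y, z⟩ ⟨hy, hz⟩
    rw [mem_closedBall', Prod.dist_eq, max_le_iff]
    exact ⟨mod_cast hy.trans le_self_add,
      mod_cast (nndist_triangle o y z).trans (add_le_add hy hz)⟩

end TwoStep

/-- Any pair of points can be moved to any other by a bijective dilation whose ratio relates the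
two distances; a pair of coinciding points can be moved by a dilation of every ratio. -/
def IsSimilarityHomogeneous (X : Type*) [PseudoMetricSpace X] : Prop :=
  ∀ ⦃r : ℝ≥0⦄, r ≠ 0 → ∀ ⦃x₁ x₂ y₁ y₂ : X⦄, nndist y₁ y₂ = r * nndist x₁ x₂ →
    ∃ f : X ≃ᵈ X, ratio f = r ∧ f x₁ = y₁ ∧ f x₂ = y₂

theorem exists_dilationEquiv_of_surjective {X : Type*} [MetricSpace X] [Nontrivial X] {f : X → X}
    (hf : Function.Surjective f) {r : ℝ≥0} (hr : r ≠ 0)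
    (hdist : ∀ x y, nndist (f x) (f y) = r * nndist x y) :
    ∃ e : X ≃ᵈ X, ⇑e = f ∧ ratio e = r := by
  have hinj : Function.Injective f := Dilation.injective (mkOfNNDistEq f ⟨r, hr, hdist⟩)
  let e : X ≃ᵈ X :=
    { Equiv.ofBijective f ⟨hinj, hf⟩ with
      edist_eq' := (mkOfNNDistEq f ⟨r, hr, hdist⟩).edist_eq' }
  obtain ⟨x, y, hxy⟩ := exists_pair_ne X
  exact ⟨e, rfl, (ratio_unique_of_nndist_ne_zero (nndist_eq_zero.not.2 hxy) (hdist x y)).symm⟩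

theorem isSimilarityHomogeneous_of_isometries_of_dilations {X : Type*} [MetricSpace X]
    [Nontrivial X]
    (hisom : ∀ x₁ x₂ y₁ y₂ : X, dist x₁ x₂ = dist y₁ y₂ →
      ∃ f : X → X, Function.Surjective f ∧ (∀ u v, dist (f u) (f v) = dist u v) ∧
        f x₁ = y₁ ∧ f x₂ = y₂)
    (hdil : ∀ r : ℝ, 0 < r → ∃ f : X ≃ₜ X, ∀ x y, dist (f x) (f y) = r * dist x y) :
    IsSimilarityHomogeneous X := by
  intro r hr x₁ x₂ y₁ y₂ h
  obtain ⟨f, hf⟩ := hdil r (by positivity)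
  obtain ⟨g, hg, hgdist, hg₁, hg₂⟩ := hisom (f x₁) (f x₂) y₁ y₂ (by
    rw [hf]; exact (congrArg NNReal.toReal h).symm)
  obtain ⟨e, he, her⟩ := exists_dilationEquiv_of_surjective (hg.comp f.surjective) hr
    fun x y => NNReal.eq ((hgdist _ _).trans (hf x y))
  exact ⟨e, her, by rw [he]; exact hg₁, by rw [he]; exact hg₂⟩

namespace IsSimilarityHomogeneous

section PseudoMetricSpace

variable {X : Type*} [PseudoMetricSpace X] {a b r : ℝ≥0}

theorem exists_fixing (hX : IsSimilarityHomogeneous X) (o : X) (hr : r ≠ 0) :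
    ∃ f : X ≃ᵈ X, ratio f = r ∧ f o = o := by
  obtain ⟨f, hf, hfo, -⟩ := hX hr (x₁ := o) (x₂ := o) (y₁ := o) (y₂ := o) (by simp)
  exact ⟨f, hf, hfo⟩

theorem properSpace [LocallyCompactSpace X] (hX : IsSimilarityHomogeneous X) : ProperSpace X := by
  refine ProperSpace.of_isCompact_closedBall_of_le 1 fun o R hR => ?_
  obtain ⟨ε, hε, hcomp⟩ := exists_isCompact_closedBall o
  lift ε to ℝ≥0 using hε.le
  lift R to ℝ≥0 using zero_le_one.trans hR
  have hε : ε ≠ 0 := by exact_mod_cast hε.ne'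
  have hR : R ≠ 0 := by rintro rfl; norm_num at hR
  obtain ⟨f, hf, hfo⟩ := hX.exists_fixing o (div_ne_zero hε hR)
  have hmaps : MapsTo f (closedBall o R) (closedBall o ε) := by
    have := mapsTo_closedBall f o R
    rwa [hfo, hf, ← NNReal.coe_mul, div_mul_cancel₀ _ hR] at this
  exact (f.toHomeomorph.isCompact_preimage.2 hcomp).of_isClosed_subset isClosed_closedBall hmaps

theorem twoStep_eq_sSup_image (hX : IsSimilarityHomogeneous X) (o : X) (a b : ℝ≥0) :
    twoStep X a b =
      sSup ((nndist o ·.2) '' {q : X × X | nndist o q.1 ≤ a ∧ nndist q.1 q.2 ≤ b}) := by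
  refine congrArg sSup (Set.ext fun c => ⟨?_, ?_⟩)
  · rintro ⟨x, y, z, hxy, hyz, rfl⟩
    obtain ⟨f, hf, rfl, -⟩ :=
      hX one_ne_zero (x₁ := x) (x₂ := x) (y₁ := o) (y₂ := o) (by simp only [nndist_self, mul_zero])
    have hdist (u v : X) : nndist (f u) (f v) = nndist u v := by
      rw [nndist_eq, hf, one_mul]
    exact ⟨(f y, f z), ⟨(hdist x y).trans_le hxy, (hdist y z).trans_le hyz⟩, hdist x z⟩
  · rintro ⟨⟨y, z⟩, ⟨hy, hz⟩, rfl⟩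
    exact ⟨o, y, z, hy, hz, rfl⟩

theorem exists_nndist_eq_twoStep [ProperSpace X] [Nonempty X] (hX : IsSimilarityHomogeneous X)
    (a b : ℝ≥0) :
    ∃ x y z : X, nndist x y ≤ a ∧ nndist y z ≤ b ∧ nndist x z = twoStep X a b := by
  obtain ⟨o⟩ := ‹Nonempty X›
  have hne : {q : X × X | nndist o q.1 ≤ a ∧ nndist q.1 q.2 ≤ b}.Nonempty := ⟨(o, o), by simp⟩
  have hcont : Continuous fun q : X × X => nndist o q.2 := by fun_prop
  obtain ⟨⟨y, z⟩, ⟨hy, hz⟩, hoz⟩ :=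
    ((isCompact_setOf_nndist_le o a b).image hcont).sSup_mem (hne.image _)
  exact ⟨o, y, z, hy, hz, hoz.trans (hX.twoStep_eq_sSup_image o a b).symm⟩

theorem mul_twoStep_le [ProperSpace X] [Nonempty X] (hX : IsSimilarityHomogeneous X) (hr : r ≠ 0)
    (a b : ℝ≥0) : r * twoStep X a b ≤ twoStep X (r * a) (r * b) := by
  obtain ⟨x, y, z, hxy, hyz, hxz⟩ := hX.exists_nndist_eq_twoStep a b
  obtain ⟨f, rfl, -⟩ := hX.exists_fixing x hr
  rw [← hxz, ← Dilation.nndist_eq f]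
  apply nndist_le_twoStep (y := f y)
  · rw [Dilation.nndist_eq]; gcongr
  · rw [Dilation.nndist_eq]; gcongr

theorem twoStep_mul_mul [ProperSpace X] [Nonempty X] (hX : IsSimilarityHomogeneous X)
    (r a b : ℝ≥0) : twoStep X (r * a) (r * b) = r * twoStep X a b := by
  rcases eq_or_ne r 0 with rfl | hr
  · simpa using twoStep_le_add (X := X) 0 0
  refine le_antisymm ?_ (hX.mul_twoStep_le hr a b)
  have := hX.mul_twoStep_le (inv_ne_zero hr) (r * a) (r * b)
  rwa [inv_mul_cancel_left₀ hr, inv_mul_cancel_left₀ hr,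
    inv_mul_le_iff₀ (pos_iff_ne_zero.2 hr)] at this

theorem exists_nndist_le_of_le_twoStep [ProperSpace X] (hX : IsSimilarityHomogeneous X) {x y : X}
    (hxy : nndist x y ≤ twoStep X a b) : ∃ w, nndist x w ≤ a ∧ nndist w y ≤ b := by
  rcases eq_or_ne (nndist x y) 0 with hdist | hdist
  · exact ⟨x, by simp, by simp [hdist]⟩
  have : Nonempty X := ⟨x⟩
  obtain ⟨x', w', y', hxw, hwy, hxy'⟩ := hX.exists_nndist_eq_twoStep a b
  have hpos : 0 < twoStep X a b := (pos_iff_ne_zero.2 hdist).trans_le hxy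
  obtain ⟨f, hf, rfl, rfl⟩ := hX (div_ne_zero hdist hpos.ne') (x₁ := x') (x₂ := y') (y₁ := x)
    (y₂ := y) (by rw [hxy', div_mul_cancel₀ _ hpos.ne'])
  have hcontr (u v : X) : nndist (f u) (f v) ≤ nndist u v := by
    rw [Dilation.nndist_eq, hf]
    exact mul_le_of_le_one_left' (div_le_one_of_le₀ hxy zero_le)
  exact ⟨f w', (hcontr _ _).trans hxw, (hcontr _ _).trans hwy⟩

theorem twoStep_assoc [ProperSpace X] [Nonempty X] (hX : IsSimilarityHomogeneous X) (a b c : ℝ≥0) :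
    twoStep X (twoStep X a b) c = twoStep X a (twoStep X b c) := by
  have h (a b c : ℝ≥0) : twoStep X (twoStep X a b) c ≤ twoStep X a (twoStep X b c) := by
    obtain ⟨x, y, z, hxy, hyz, hxz⟩ := hX.exists_nndist_eq_twoStep (twoStep X a b) c
    obtain ⟨w, hxw, hwy⟩ := hX.exists_nndist_le_of_le_twoStep hxy
    exact hxz ▸ nndist_le_twoStep hxw (nndist_le_twoStep hwy hyz)
  refine (h a b c).antisymm ?_
  simpa only [twoStep_comm] using h c b a

theorem twoStep_one_one_lt_two [ProperSpace X] [Nonempty X] (hX : IsSimilarityHomogeneous X)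
    (hmid : ∀ x y z : X, dist x y = dist y z → dist x z = dist x y + dist y z → x = y) :
    twoStep X 1 1 < 2 := by
  by_contra! hge
  obtain ⟨x, y, z, hxy, hyz, hxz⟩ := hX.exists_nndist_eq_twoStep 1 1
  have hxy : dist x y ≤ 1 := hxy
  have hyz : dist y z ≤ 1 := hyz
  have hxz : 2 ≤ dist x z := by exact_mod_cast hge.trans_eq hxz.symm
  have htri := dist_triangle x y z
  obtain rfl := hmid x y z (by linarith) (by linarith)
  linarith only [hyz, hxz]

end PseudoMetricSpace

section MetricSpace

variable {X : Type*} [MetricSpace X] [Nontrivial X] {p : ℝ}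

theorem exists_nndist_eq (hX : IsSimilarityHomogeneous X) (o : X) (r : ℝ≥0) :
    ∃ y, nndist y o = r := by
  rcases eq_or_ne r 0 with rfl | hr
  · exact ⟨o, nndist_self o⟩
  obtain ⟨y, hy⟩ := exists_ne o
  have hdist : nndist y o ≠ 0 := nndist_eq_zero.not.2 hy
  obtain ⟨f, hf, hfo⟩ := hX.exists_fixing o (div_ne_zero hr hdist)
  refine ⟨f y, ?_⟩
  calc nndist (f y) o = nndist (f y) (f o) := by rw [hfo]
    _ = r := by rw [Dilation.nndist_eq, hf, div_mul_cancel₀ _ hdist]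

theorem twoStep_zero_right (hX : IsSimilarityHomogeneous X) (a : ℝ≥0) : twoStep X a 0 = a := by
  refine le_antisymm (by simpa using twoStep_le_add (X := X) a 0) ?_
  obtain ⟨o, -⟩ := exists_pair_ne X
  obtain ⟨y, hy⟩ := hX.exists_nndist_eq o a
  exact hy ▸ nndist_le_twoStep le_rfl (nndist_self o).le

theorem isHomogeneousAdd_twoStep [ProperSpace X] (hX : IsSimilarityHomogeneous X) :
    IsHomogeneousAdd (twoStep X) where
  mono _ _ _ _ ha hb := twoStep_mono ha hb
  assoc := hX.twoStep_assoc
  mul_mul := hX.twoStep_mul_mul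
  zero_left a := by rw [twoStep_comm, hX.twoStep_zero_right]
  zero_right := hX.twoStep_zero_right

theorem not_isUltrametricDist [ProperSpace X] (hX : IsSimilarityHomogeneous X) :
    ¬ IsUltrametricDist X := by
  intro _
  obtain ⟨o, -⟩ := exists_pair_ne X
  obtain ⟨r, hr, hgap⟩ := exists_lt_forall_dist_le_of_isUltrametricDist o one_pos
  have hr0 : 0 ≤ r := by simpa using hgap o (by simp)
  lift r to ℝ≥0 using hr0
  obtain ⟨y, hy⟩ := hX.exists_nndist_eq o ((r + 1) / 2)
  have hdist : dist y o = (r + 1) / 2 := by simpa using congrArg NNReal.toReal hy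
  linarith only [hr, hdist, hgap y (by linarith only [hr, hdist])]

theorem one_lt_twoStep_one_one [ProperSpace X] (hX : IsSimilarityHomogeneous X) :
    1 < twoStep X 1 1 := by
  by_contra! hle
  refine hX.not_isUltrametricDist ⟨fun x y z => ?_⟩
  let m := max (nndist x y) (nndist y z)
  suffices nndist x z ≤ m from this
  calc nndist x z ≤ twoStep X m m := nndist_le_twoStep (le_max_left _ _) (le_max_right _ _)
    _ = m * twoStep X 1 1 := by simpa only [mul_one] using hX.twoStep_mul_mul m 1 1
    _ ≤ m := mul_le_of_le_one_right' hle

theorem dist_rpow_le_add [ProperSpace X] (hX : IsSimilarityHomogeneous X) (hp : 0 < p)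
    (hp2 : twoStep X 1 1 ^ p = 2) (x y z : X) :
    dist x z ^ p ≤ dist x y ^ p + dist y z ^ p := by
  suffices nndist x z ^ p ≤ nndist x y ^ p + nndist y z ^ p by exact_mod_cast this
  rw [← hX.isHomogeneousAdd_twoStep.rpow_eq_add hp hp2]
  exact NNReal.rpow_le_rpow (nndist_le_twoStep le_rfl le_rfl) hp.le

theorem exists_between_rpow [ProperSpace X] (hX : IsSimilarityHomogeneous X) (hp : 0 < p)
    (hp2 : twoStep X 1 1 ^ p = 2) {x y : X} (hxy : x ≠ y) :
    ∃ w, w ≠ x ∧ w ≠ y ∧ dist x w ^ p + dist w y ^ p = dist x y ^ p := by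
  have hpos : 0 < nndist x y := pos_iff_ne_zero.2 (nndist_eq_zero.not.2 hxy)
  have hM : 1 < twoStep X 1 1 := hX.one_lt_twoStep_one_one
  let c := nndist x y / twoStep X 1 1
  have hc : c < nndist x y := div_lt_self hpos hM
  have hcc : twoStep X c c = nndist x y := by
    have := hX.twoStep_mul_mul c 1 1
    rwa [mul_one, div_mul_cancel₀ _ (zero_lt_one.trans hM).ne'] at this
  obtain ⟨w, hxw, hwy⟩ := hX.exists_nndist_le_of_le_twoStep hcc.ge
  refine ⟨w, ?_, ?_, le_antisymm ?_ (hX.dist_rpow_le_add hp hp2 x w y)⟩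
  · rintro rfl
    exact hwy.not_gt hc
  · rintro rfl
    exact hxw.not_gt hc
  · suffices nndist x w ^ p + nndist w y ^ p ≤ nndist x y ^ p by exact_mod_cast this
    calc nndist x w ^ p + nndist w y ^ p ≤ c ^ p + c ^ p := by gcongr
      _ = nndist x y ^ p := by
        rw [← hX.isHomogeneousAdd_twoStep.rpow_eq_add hp hp2, hcc]

end MetricSpace

end IsSimilarityHomogeneous

end Desnowflake

/-- If a locally compact, 2-point isometrically homogeneous metric space admitting dilations
of every factor has no between-point, then there is `p > 1` such that `d^p` is a metric on
`X` and `(X, d^p)` is geodesic. -/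
theorem desnowflake_geodesic_of_no_between_point
    {X : Type*} [MetricSpace X] [LocallyCompactSpace X]
    (h2 : ∀ x₁ x₂ y₁ y₂ : X, dist x₁ x₂ = dist y₁ y₂ →
      ∃ f : X → X, Function.Surjective f ∧ (∀ u v, dist (f u) (f v) = dist u v) ∧
        f x₁ = y₁ ∧ f x₂ = y₂)
    (hdil : ∀ lam : ℝ, 0 < lam →
      ∃ f : X ≃ₜ X, ∀ x y, dist (f x) (f y) = lam * dist x y)
    (hnb : ¬ ∃ z x y : X, x ≠ z ∧ y ≠ z ∧ dist x y = dist x z + dist z y) :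
    ∃ p : ℝ, 1 < p ∧
      (∀ x y z : X, dist x z ^ p ≤ dist x y ^ p + dist y z ^ p) ∧
      (∀ x y : X, ∃ γ : ℝ → X, γ 0 = x ∧ γ (dist x y ^ p) = y ∧
        ∀ s ∈ Set.Icc (0 : ℝ) (dist x y ^ p), ∀ t ∈ Set.Icc (0 : ℝ) (dist x y ^ p),
          dist (γ s) (γ t) ^ p = |s - t|) := by
  rcases subsingleton_or_nontrivial X with _ | _
  · have htri (x y z : X) : dist x z ^ (2 : ℝ) ≤ dist x y ^ (2 : ℝ) + dist y z ^ (2 : ℝ) := by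
      simp [Subsingleton.elim x z, Subsingleton.elim y z]
    exact ⟨2, one_lt_two, htri, exists_rpow_geodesic two_pos htri fun x y hxy =>
      absurd (Subsingleton.elim x y) hxy⟩
  have hX : IsSimilarityHomogeneous X := isSimilarityHomogeneous_of_isometries_of_dilations h2 hdil
  have hproper : ProperSpace X := hX.properSpace
  have hlt : twoStep X 1 1 < 2 := hX.twoStep_one_one_lt_two fun x y z hxy hxz =>
    by_contra fun hne => hnb ⟨y, x, z, hne, dist_pos.1 (hxy ▸ dist_pos.2 hne) |>.symm, hxz⟩
  obtain ⟨p, hp, hp2⟩ : ∃ p : ℝ, 1 < p ∧ twoStep X 1 1 ^ p = 2 :=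
    exists_one_lt_rpow_eq hX.one_lt_twoStep_one_one hlt
  have hp0 : 0 < p := zero_lt_one.trans hp
  have htri (x y z : X) : dist x z ^ p ≤ dist x y ^ p + dist y z ^ p :=
    hX.dist_rpow_le_add hp0 hp2 x y z
  exact ⟨p, hp, htri, exists_rpow_geodesic hp0 htri fun _ _ => hX.exists_between_rpow hp0 hp2⟩
end

section
/- Let (X,d) be a metric space that is locally compact, 2-point isometrically homogeneous, and admits dilations of every factor. Then (X,d) is metrically doubling: there is a constant C such that every closed ball of radius r > 0 in X can be covered by at most C closed balls of radius r/2. -/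
/-!
A composite of a dilation and an isometry embeds any closed ball into one fixed totally bounded
ball, multiplying all distances by the ratio of the radii. Covers centred in the image pull back
along such a map, even a non-surjective one, so the number of half-radius balls needed is bounded
independently of the ball.
-/

open Metric Set
open scoped NNReal

section EMetric

variable {X Y : Type*} [PseudoEMetricSpace X] [PseudoEMetricSpace Y]

lemma coveringNumber_mul_le_coveringNumber_image {f : X → Y} {K : ℝ≥0}
    (hf : AntilipschitzWith K f) (ε : ℝ≥0) (A : Set X) :
    coveringNumber (K * ε) A ≤ coveringNumber ε (f '' A) := by
  refine le_iInf fun N ↦ le_iInf₂ fun hNA hN ↦ ?_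
  obtain ⟨M, hMA, hMN⟩ := SurjOn.exists_bijOn_subset hNA
  have hM : IsCover (K * ε) A M := fun x hx ↦ by
    obtain ⟨_, hy, hxy⟩ := hN (mem_image_of_mem f hx)
    obtain ⟨m, hm, rfl⟩ := hMN.surjOn hy
    refine ⟨m, hm, ?_⟩
    calc edist x m ≤ K * edist (f x) (f m) := hf x m
      _ ≤ K * ε := by gcongr; exact hxy
      _ = (K * ε : ℝ≥0) := (ENNReal.coe_mul K ε).symm
  calc coveringNumber (K * ε) A ≤ M.encard := hM.coveringNumber_le_encard hMA
    _ = N.encard := by rw [← hMN.image_eq, hMN.injOn.encard_image]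

lemma coveringNumber_ne_top_of_totallyBounded {ε : ℝ≥0} {A : Set X} (hA : TotallyBounded A)
    (hε : ε ≠ 0) : coveringNumber ε A ≠ ⊤ := by
  obtain ⟨N, hNA, hfin, hN⟩ := exists_finite_isCover_of_totallyBounded hε hA
  exact ne_top_of_le_ne_top (encard_ne_top_iff.2 hfin) (hN.coveringNumber_le_encard hNA)

end EMetric

section PseudoMetric

variable {X Y : Type*} [PseudoMetricSpace X] [PseudoMetricSpace Y]

lemma coveringNumber_closedBall_le_of_bilipschitz {f : X → Y} {K L : ℝ≥0}
    (hK : AntilipschitzWith K f) (hL : LipschitzWith L f) (ε : ℝ≥0) (x : X) (r : ℝ) :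
    coveringNumber (K * ε) (closedBall x r) ≤ coveringNumber (ε / 2) (closedBall (f x) (L * r)) :=
  (coveringNumber_mul_le_coveringNumber_image hK ε _).trans <|
    coveringNumber_subset_le (hL.mapsTo_closedBall x r).image_subset

lemma exists_finset_card_le_subset_iUnion_closedBall {ε : ℝ≥0} {A : Set X} {n : ℕ}
    (h : coveringNumber ε A ≤ n) :
    ∃ s : Finset X, s.card ≤ n ∧ A ⊆ ⋃ y ∈ s, closedBall y ε := by
  obtain ⟨N, -, hfin, hN, hcard⟩ :=
    exists_set_encard_eq_coveringNumber (ne_top_of_le_ne_top (ENat.natCast_ne_top n) h)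
  lift N to Finset X using hfin
  rw [← hcard, encard_coe_eq_coe_finsetCard] at h
  exact ⟨N, mod_cast h, hN.subset_iUnion_closedBall⟩

lemma exists_totallyBounded_closedBall [WeaklyLocallyCompactSpace X] (x : X) :
    ∃ ρ > 0, TotallyBounded (closedBall x ρ) := by
  obtain ⟨K, hK, hKx⟩ := exists_compact_mem_nhds x
  obtain ⟨ρ, hρ, hρK⟩ := nhds_basis_closedBall.mem_iff.1 hKx
  exact ⟨ρ, hρ, hK.totallyBounded.subset hρK⟩

theorem doubling_of_homogeneous_dilations_general
    (htb : ∀ x : X, ∃ ρ > 0, TotallyBounded (closedBall x ρ))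
    (hhom : ∀ x y : X, ∃ g : X → X, Isometry g ∧ g x = y)
    (hdil : ∀ lam : ℝ, 0 < lam → ∃ f : X → X, ∀ x y, dist (f x) (f y) = lam * dist x y) :
    ∃ C : ℕ, ∀ (x : X) (r : ℝ), 0 < r →
      ∃ s : Finset X, s.card ≤ C ∧ closedBall x r ⊆ ⋃ y ∈ s, closedBall y (r / 2) := by
  rcases isEmpty_or_nonempty X with _ | ⟨⟨x₀⟩⟩
  · exact ⟨0, isEmptyElim⟩
  obtain ⟨ρ, hρ, hball⟩ := htb x₀
  lift ρ to ℝ≥0 using hρ.le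
  replace hρ : 0 < ρ := mod_cast hρ
  obtain ⟨C, hC⟩ := ENat.ne_top_iff_exists.1 <|
    coveringNumber_ne_top_of_totallyBounded hball (ε := ρ / 2 / 2) (by positivity)
  refine ⟨C, fun x r hr ↦ ?_⟩
  lift r to ℝ≥0 using hr.le
  replace hr : 0 < r := mod_cast hr
  obtain ⟨f, hf⟩ := hdil (ρ / r : ℝ≥0) (by positivity)
  obtain ⟨g, hg, hgx⟩ := hhom (f x) x₀
  have hdist (u v : X) : dist (g (f u)) (g (f v)) = (ρ / r : ℝ≥0) * dist u v := by
    rw [hg.dist_eq, hf]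
  have hanti : AntilipschitzWith (ρ / r)⁻¹ (g ∘ f) := .of_le_mul_dist fun u v ↦ by
    rw [Function.comp_apply, Function.comp_apply, hdist, NNReal.coe_inv,
      inv_mul_cancel_left₀ (by positivity)]
  have hlip : LipschitzWith (ρ / r) (g ∘ f) := .of_dist_le_mul fun u v ↦ (hdist u v).le
  have hcov : coveringNumber (r / 2) (closedBall x r) ≤ C := calc
    coveringNumber (r / 2) (closedBall x r)
    _ = coveringNumber ((ρ / r)⁻¹ * (ρ / 2)) (closedBall x r) := by
      congr 1
      field_simp
    _ ≤ coveringNumber (ρ / 2 / 2) (closedBall (g (f x)) ((ρ / r : ℝ≥0) * r)) :=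
      coveringNumber_closedBall_le_of_bilipschitz hanti hlip _ x r
    _ = coveringNumber (ρ / 2 / 2) (closedBall x₀ ρ) := by
      rw [hgx, ← NNReal.coe_mul, div_mul_cancel₀ ρ hr.ne']
    _ = C := hC.symm
  exact_mod_cast exists_finset_card_le_subset_iUnion_closedBall hcov

end PseudoMetric

/-- A locally compact, 2-point isometrically homogeneous metric space admitting dilations of
every factor is metrically doubling: there is `C` such that every closed ball of radius
`r > 0` can be covered by at most `C` closed balls of radius `r/2`. -/
theorem doubling_of_homogeneous_dilations
    {X : Type*} [MetricSpace X] [LocallyCompactSpace X]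
    (h2 : ∀ x₁ x₂ y₁ y₂ : X, dist x₁ x₂ = dist y₁ y₂ →
      ∃ f : X → X, Function.Surjective f ∧ (∀ u v, dist (f u) (f v) = dist u v) ∧
        f x₁ = y₁ ∧ f x₂ = y₂)
    (hdil : ∀ lam : ℝ, 0 < lam →
      ∃ f : X ≃ₜ X, ∀ x y, dist (f x) (f y) = lam * dist x y) :
    ∃ C : ℕ, ∀ (x : X) (r : ℝ), 0 < r →
      ∃ s : Finset X, s.card ≤ C ∧
        Metric.closedBall x r ⊆ ⋃ y ∈ s, Metric.closedBall y (r / 2) :=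
  doubling_of_homogeneous_dilations_general exists_totallyBounded_closedBall
    (fun x y ↦ let ⟨g, _, hg, hgx, _⟩ := h2 x x y y (by simp); ⟨g, .of_dist_eq hg, hgx⟩)
    (fun lam hlam ↦ (hdil lam hlam).imp' _ fun _ hf ↦ hf)
end

section
/- Let (X,d) be a metric space with at least two points that is locally compact, 2-point isometrically homogeneous, and admits dilations of every factor, and suppose p ≥ 1 is such that d^p is a metric on X. Then p is at most the Hausdorff dimension of (X,d). -/
/-!
If `d ^ p` satisfies the triangle inequality, then `x ↦ d (x₀, x) ^ p` is `1`-Lipschitz for `d ^ p`,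
that is, `p`-Hölder for `d`. Dilations and homogeneity make this function map onto `[0, ∞)`, a set
of dimension one, and a `p`-Hölder map divides the Hausdorff dimension by at least `p`.
-/

open Module Set
open scoped NNReal ENNReal

theorem mul_finrank_le_dimH_of_holderOnWith {X E : Type*} [EMetricSpace X]
    [NormedAddCommGroup E] [NormedSpace ℝ E] [FiniteDimensional ℝ E]
    {C r : ℝ≥0} {f : X → E} {s : Set X} (hf : HolderOnWith C r f s)
    (hs : (interior (f '' s)).Nonempty) :
    (r : ℝ≥0∞) * finrank ℝ E ≤ dimH s := by
  obtain rfl | hr := eq_zero_or_pos r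
  · simp
  · have hdiv : (finrank ℝ E : ℝ≥0∞) ≤ dimH s / r :=
      Real.dimH_of_nonempty_interior hs ▸ hf.dimH_image_le hr
    exact mul_comm (r : ℝ≥0∞) _ ▸ ENNReal.mul_le_of_le_div hdiv

theorem holderWith_dist_rpow {X : Type*} [PseudoMetricSpace X] {p : ℝ≥0}
    (htri : ∀ x y z : X, dist x z ^ (p : ℝ) ≤ dist x y ^ (p : ℝ) + dist y z ^ (p : ℝ)) (x₀ : X) :
    HolderWith 1 p fun x ↦ dist x₀ x ^ (p : ℝ) := by
  intro x y
  have hdist : dist (dist x₀ x ^ (p : ℝ)) (dist x₀ y ^ (p : ℝ)) ≤ dist x y ^ (p : ℝ) := by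
    rw [Real.dist_eq, abs_sub_le_iff]
    have hx := htri x₀ y x
    have hy := htri x₀ x y
    rw [dist_comm y x] at hx
    constructor <;> linarith
  rw [edist_dist, edist_dist, ENNReal.ofReal_rpow_of_nonneg dist_nonneg p.coe_nonneg,
    ENNReal.coe_one, one_mul]
  exact ENNReal.ofReal_le_ofReal hdist

theorem range_dist_eq_Ici {X : Type*} [MetricSpace X] [Nontrivial X]
    (hhom : ∀ x y : X, ∃ f : X → X, Isometry f ∧ f x = y)
    (hdil : ∀ c : ℝ, 0 < c → ∃ f : X → X, ∀ x y, dist (f x) (f y) = c * dist x y) (x₀ : X) :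
    range (dist x₀) = Ici 0 := by
  refine Subset.antisymm (range_subset_iff.2 fun _ ↦ dist_nonneg) fun t (ht : 0 ≤ t) ↦ ?_
  obtain rfl | ht := ht.eq_or_lt
  · exact ⟨x₀, dist_self x₀⟩
  obtain ⟨y₀, hy₀⟩ := exists_ne x₀
  have hpos : 0 < dist x₀ y₀ := dist_pos.2 hy₀.symm
  obtain ⟨f, hf⟩ := hdil (t / dist x₀ y₀) (div_pos ht hpos)
  obtain ⟨g, hg, hgx₀⟩ := hhom (f x₀) x₀
  refine ⟨g (f y₀), ?_⟩
  calc
    dist x₀ (g (f y₀)) = dist (g (f x₀)) (g (f y₀)) := by rw [hgx₀]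
    _ = t / dist x₀ y₀ * dist x₀ y₀ := by rw [hg.dist_eq, hf]
    _ = t := div_mul_cancel₀ t hpos.ne'

theorem le_dimH_univ_of_range_dist_eq_Ici {X : Type*} [MetricSpace X] {p : ℝ≥0}
    (htri : ∀ x y z : X, dist x z ^ (p : ℝ) ≤ dist x y ^ (p : ℝ) + dist y z ^ (p : ℝ)) {x₀ : X}
    (hx₀ : range (dist x₀) = Ici 0) :
    (p : ℝ≥0∞) ≤ dimH (univ : Set X) := by
  obtain rfl | hp := eq_zero_or_pos p
  · simp
  have hrange : Ici 0 ⊆ (fun x ↦ dist x₀ x ^ (p : ℝ)) '' univ := by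
    intro t (ht : 0 ≤ t)
    obtain ⟨x, hx⟩ := hx₀.ge (Real.rpow_nonneg ht (p : ℝ)⁻¹)
    exact ⟨x, mem_univ x, by simp only [hx, Real.rpow_inv_rpow ht (NNReal.coe_pos.2 hp).ne']⟩
  have hint : (interior ((fun x ↦ dist x₀ x ^ (p : ℝ)) '' univ)).Nonempty :=
    (interior_Ici (a := (0 : ℝ)) ▸ nonempty_Ioi).mono (interior_mono hrange)
  simpa using mul_finrank_le_dimH_of_holderOnWith
    (holderOnWith_univ.2 (holderWith_dist_rpow htri x₀)) hint

theorem p_le_hausdorff_dimension_general {X : Type*} [MetricSpace X] [Nontrivial X]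
    (hhom : ∀ x y : X, ∃ f : X → X, Isometry f ∧ f x = y)
    (hdil : ∀ c : ℝ, 0 < c → ∃ f : X → X, ∀ x y, dist (f x) (f y) = c * dist x y)
    (p : ℝ≥0)
    (htri : ∀ x y z : X, dist x z ^ (p : ℝ) ≤ dist x y ^ (p : ℝ) + dist y z ^ (p : ℝ)) :
    (p : ℝ≥0∞) ≤ dimH (univ : Set X) := by
  obtain ⟨x₀⟩ : Nonempty X := inferInstance
  exact le_dimH_univ_of_range_dist_eq_Ici htri (range_dist_eq_Ici hhom hdil x₀)

/-- If a metric space with at least two points is locally compact, 2-point isometrically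
homogeneous, admits dilations of every factor, and `p ≥ 1` is such that `d^p` is a metric
on `X`, then `p` is at most the Hausdorff dimension of `(X,d)`. -/
theorem p_le_hausdorff_dimension
    {X : Type*} [MetricSpace X] [LocallyCompactSpace X]
    (htwo : ∃ x y : X, x ≠ y)
    (h2 : ∀ x₁ x₂ y₁ y₂ : X, dist x₁ x₂ = dist y₁ y₂ →
      ∃ f : X → X, Function.Surjective f ∧ (∀ u v, dist (f u) (f v) = dist u v) ∧
        f x₁ = y₁ ∧ f x₂ = y₂)
    (hdil : ∀ lam : ℝ, 0 < lam →
      ∃ f : X ≃ₜ X, ∀ x y, dist (f x) (f y) = lam * dist x y)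
    (p : ℝ) (hp : 1 ≤ p)
    (htri : ∀ x y z : X, dist x z ^ p ≤ dist x y ^ p + dist y z ^ p) :
    ENNReal.ofReal p ≤ dimH (Set.univ : Set X) := by
  have : Nontrivial X := ⟨htwo⟩
  lift p to ℝ≥0 using zero_le_one.trans hp
  have hhom (x y : X) : ∃ f : X → X, Isometry f ∧ f x = y :=
    let ⟨f, _, hf, hfx, _⟩ := h2 x x y y (by simp only [dist_self])
    ⟨f, .of_dist_eq hf, hfx⟩
  simpa using p_le_hausdorff_dimension_general hhom
    (fun c hc ↦ let ⟨f, hf⟩ := hdil c hc; ⟨f, hf⟩) p htri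
end
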